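/- arXiv:1605.04877 — 5 statements merged into one kernel-verified Lean document; each statement's English description precedes it below -/
import Mathlib

section
/- Let G be a locally finite undirected graph on a vertex set V and let b ≥ 2 be an integer. For each x ∈ V let R(x) be a set of functions from the neighbourhood N(x) of x to {0,…,b−1}, and set p(x) := 1 − |R(x)|/b^{|N(x)|}. Suppose that Δ := sup_{x∈V} |{y ∈ V : N(x) ∩ N(y) ≠ ∅}| is finite (here y = x is allowed, so this counts the degree of x in the graph Rel(G) that joins x and y whenever their neighbourhoods intersect). If p(x) < 1/(e·Δ) for every x ∈ V, where e is Euler's number, then there exists a function f : V → {0,…,b−1} such that for every x ∈ V the restriction of f to N(x) belongs to R(x). -/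
open Set

/-- Points of `Ω` avoiding all bad events indexed by `T`. -/
noncomputable def lllAvoid {V Ω : Type*} [Fintype Ω] (A : V → Set Ω) (T : Finset V) : Set Ω :=
  {ω | ∀ y ∈ T, ω ∉ A y}

/-- One step: adding one more event to avoid. -/
lemma lllAvoid_insert {V Ω : Type*} [Fintype Ω] [DecidableEq V] (A : V → Set Ω) (T : Finset V)
    (y : V) (q : ℝ)
    (h : ((A y ∩ lllAvoid A T).ncard : ℝ) ≤ q * (lllAvoid A T).ncard) :
    (1 - q) * ((lllAvoid A T).ncard : ℝ) ≤ (lllAvoid A (insert y T)).ncard := by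
  have e : lllAvoid A (insert y T) = lllAvoid A T \ A y := by
    ext ω; simp [lllAvoid, and_comm]
  have h2 := Set.ncard_inter_add_ncard_diff_eq_ncard (lllAvoid A T) (A y) (Set.toFinite _)
  rw [← e, Set.inter_comm] at h2
  have h3 : ((A y ∩ lllAvoid A T).ncard : ℝ) + (lllAvoid A (insert y T)).ncard
      = (lllAvoid A T).ncard := by exact_mod_cast h2
  linarith

/-- The abstract finite local lemma (counting form). -/
lemma lll_abstract {V Ω : Type*} [Fintype Ω] [DecidableEq V] (A : V → Set Ω)
    (D : V → Finset V) (d : ℕ) (p q : ℝ) (hq0 : 0 ≤ q) (hq1 : q < 1)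
    (hpq : p ≤ q * (1 - q) ^ d) (hD : ∀ x, ((D x).erase x).card ≤ d) (S : Finset V)
    (hind : ∀ x ∈ S, ∀ T ⊆ S, Disjoint T (D x) →
      ((A x ∩ lllAvoid A T).ncard : ℝ) ≤ p * (lllAvoid A T).ncard) :
    (1 - q) ^ S.card * (Fintype.card Ω : ℝ) ≤ (lllAvoid A S).ncard := by
  have main : ∀ T : Finset V, T ⊆ S → ∀ x ∈ S,
      ((A x ∩ lllAvoid A T).ncard : ℝ) ≤ q * (lllAvoid A T).ncard := by
    intro T
    induction T using Finset.strongInduction with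
    | H T ih =>
    intro hTS x hx
    by_cases hxT : x ∈ T
    · have : A x ∩ lllAvoid A T = ∅ := by
        ext ω
        simp only [Set.mem_inter_iff, Set.mem_empty_iff_false, iff_false]
        exact fun h => h.2 x hxT h.1
      rw [this]; simp; positivity
    · set T2 := T \ D x with hT2
      have inner : ∀ W : Finset V, W ⊆ T ∩ D x →
          (1 - q) ^ W.card * ((lllAvoid A T2).ncard : ℝ) ≤ (lllAvoid A (W ∪ T2)).ncard := by
        intro W
        induction W using Finset.induction_on with
        | empty => simp
        | insert y W hy ihW =>
          intro hW
          have hWs : W ⊆ T ∩ D x := fun z hz => hW (Finset.mem_insert_of_mem hz)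
          have hyT := Finset.mem_inter.1 (hW (Finset.mem_insert_self y W))
          have hsub : W ∪ T2 ⊂ T := by
            rw [Finset.ssubset_iff_of_subset]
            · refine ⟨y, hyT.1, ?_⟩
              simp [hT2, hy, hyT.2]
            · apply Finset.union_subset
              · exact hWs.trans Finset.inter_subset_left
              · exact Finset.sdiff_subset
          have h1 := lllAvoid_insert A (W ∪ T2) y q
            (ih _ hsub (hsub.1.trans hTS) y (hTS hyT.1))
          rw [Finset.insert_union, Finset.card_insert_of_notMem hy, pow_succ]
          have h2 := mul_le_mul_of_nonneg_left (ihW hWs) (by linarith : 0 ≤ 1 - q)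
          linarith
      have h1 := inner (T ∩ D x) subset_rfl
      have hu : T ∩ D x ∪ T2 = T := by
        ext z; simp [hT2]; tauto
      rw [hu] at h1
      have hc : (T ∩ D x).card ≤ d := by
        refine le_trans (Finset.card_le_card ?_) (hD x)
        intro z hz
        rw [Finset.mem_inter] at hz
        rw [Finset.mem_erase]
        exact ⟨fun h => hxT (h ▸ hz.1), hz.2⟩
      have h2 := hind x hx T2 (Finset.sdiff_subset.trans hTS) Finset.sdiff_disjoint
      have h3 : ((A x ∩ lllAvoid A T).ncard : ℝ) ≤ (A x ∩ lllAvoid A T2).ncard := by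
        norm_cast
        apply Set.ncard_le_ncard _ (Set.toFinite _)
        intro ω hω
        exact ⟨hω.1, fun y hy => hω.2 y (Finset.sdiff_subset hy)⟩
      have h4 : (1 - q) ^ d ≤ (1 - q) ^ (T ∩ D x).card :=
        pow_le_pow_of_le_one (by linarith) (by linarith) hc
      calc ((A x ∩ lllAvoid A T).ncard : ℝ) ≤ p * (lllAvoid A T2).ncard := h3.trans h2
        _ ≤ q * (1 - q) ^ d * (lllAvoid A T2).ncard := by gcongr
        _ ≤ q * (1 - q) ^ (T ∩ D x).card * (lllAvoid A T2).ncard := by gcongr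
        _ = q * ((1 - q) ^ (T ∩ D x).card * (lllAvoid A T2).ncard) := by ring
        _ ≤ q * (lllAvoid A T).ncard := by gcongr
  have fin : ∀ W : Finset V, W ⊆ S →
      (1 - q) ^ W.card * (Fintype.card Ω : ℝ) ≤ (lllAvoid A W).ncard := by
    intro W
    induction W using Finset.induction_on with
    | empty => simp [lllAvoid, Set.ncard_univ]
    | insert y W hy ihW =>
      intro hW
      have hWs : W ⊆ S := fun z hz => hW (Finset.mem_insert_of_mem hz)
      have h1 := lllAvoid_insert A W y q (main W hWs y (hW (Finset.mem_insert_self y W)))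
      rw [Finset.card_insert_of_notMem hy, pow_succ]
      have h2 := mul_le_mul_of_nonneg_left (ihW hWs) (by linarith : 0 ≤ 1 - q)
      linarith
  exact fin S subset_rfl

/-- Independence of events that depend on disjoint sets of coordinates (one inequality). -/
lemma lll_indep {W C : Type*} [Finite W] [Finite C] (s : Set W) (A B : Set (W → C))
    (hA : ∀ f g : W → C, (∀ w ∈ s, f w = g w) → f ∈ A → g ∈ A)
    (hB : ∀ f g : W → C, (∀ w ∉ s, f w = g w) → f ∈ B → g ∈ B) :
    (A ∩ B).ncard * Nat.card (W → C) ≤ A.ncard * B.ncard := by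
  classical
  rw [← Set.ncard_univ, ← Set.ncard_prod, ← Set.ncard_prod]
  refine Set.ncard_le_ncard_of_injOn
    (fun z => (fun w => if w ∈ s then z.1 w else z.2 w, fun w => if w ∈ s then z.2 w else z.1 w))
    ?_ ?_ (Set.toFinite _)
  · rintro ⟨f, g⟩ ⟨⟨h1, h2⟩, -⟩
    refine ⟨hA f _ ?_ h1, hB f _ ?_ h2⟩
    · intro w hw; simp [hw]
    · intro w hw; simp [hw]
  · rintro ⟨f, g⟩ - ⟨f', g'⟩ - h
    simp only [Prod.mk.injEq, funext_iff] at h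
    ext w
    · have h1 := h.1 w
      have h2 := h.2 w
      by_cases hw : w ∈ s <;> simp_all
    · have h1 := h.1 w
      have h2 := h.2 w
      by_cases hw : w ∈ s <;> simp_all

/-- Counting a cylinder set (one inequality). -/
lemma lll_cyl {W C N : Type*} [Finite W] [Finite C] [Finite N] (i : N → W)
    (hi : Function.Injective i) (R : Set (N → C)) :
    {g : W → C | g ∘ i ∈ R}.ncard * Nat.card (N → C) ≤ R.ncard * Nat.card (W → C) := by
  classical
  rw [← Set.ncard_univ, ← Set.ncard_univ, ← Set.ncard_prod, ← Set.ncard_prod]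
  refine Set.ncard_le_ncard_of_injOn
    (fun z => (z.1 ∘ i, fun w => if h : ∃ n, i n = w then z.2 h.choose else z.1 w))
    ?_ ?_ (Set.toFinite _)
  · rintro ⟨f, g⟩ ⟨h1, -⟩
    exact ⟨h1, trivial⟩
  · rintro ⟨f, g⟩ - ⟨f', g'⟩ - h
    simp only [Prod.mk.injEq, funext_iff, Function.comp] at h
    ext w
    · by_cases hw : ∃ n, i n = w
      · obtain ⟨n, rfl⟩ := hw
        exact h.1 n
      · have h2 := h.2 w
        simpa [hw] using h2
    · have h2 := h.2 (i w)
      have hw : ∃ n, i n = i w := ⟨w, rfl⟩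
      rw [dif_pos hw, dif_pos hw] at h2
      rwa [hi hw.choose_spec] at h2

/-- The numerical choice of the parameter `q`. -/
lemma lll_param (d : ℕ) : ∃ q : ℝ, 0 ≤ q ∧ q < 1 ∧
    1 / (Real.exp 1 * ((d + 1 : ℕ) : ℝ)) ≤ q * (1 - q) ^ d := by
  have he : 1 < Real.exp 1 := by simp
  rcases Nat.eq_zero_or_pos d with rfl | hd
  · refine ⟨1 / Real.exp 1, by positivity, ?_, by simp⟩
    rw [div_lt_one (by positivity)]; exact he
  · have hd' : (0 : ℝ) < d := by exact_mod_cast hd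
    refine ⟨1 / (d + 1), by positivity, ?_, ?_⟩
    · rw [div_lt_one (by positivity)]; linarith
    · have h1 : (1 - 1 / ((d : ℝ) + 1)) = (1 + 1 / (d : ℝ))⁻¹ := by
        field_simp; ring
      have h2 : (1 + 1 / (d : ℝ)) ^ d ≤ Real.exp 1 := by
        calc (1 + 1 / (d : ℝ)) ^ d ≤ (Real.exp (1 / d)) ^ d := by
              gcongr
              rw [add_comm]
              exact Real.add_one_le_exp _
          _ = Real.exp 1 := by
              rw [← Real.exp_nat_mul]; congr 1; field_simp
      rw [h1, inv_pow, one_div, mul_inv, mul_comm, one_div]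
      push_cast
      gcongr

/-- **Lovász Local Lemma** (Theorem 1.1 of the paper).  `Adj` is the (symmetric) edge relation
of a locally finite undirected graph on `V`; `N x = {y | Adj x y}` is the neighbourhood of `x`;
`R x` is a set of functions `N x → Fin b` (a local rule); `p x = 1 − |R x| / b ^ |N x|`;
`Δ` is the (finite) supremum of the degrees in the graph `Rel(G)` joining `x` and `y`
whenever `N x ∩ N y ≠ ∅` (with `x = y` allowed).  If `p x < 1 / (e·Δ)` for all `x`, then
there is `f : V → Fin b` whose restriction to each `N x` lies in `R x`. -/
theorem lovasz_local_lemma {V : Type*} (Adj : V → V → Prop)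
    (hsymm : ∀ x y, Adj x y → Adj y x)
    (hloc : ∀ x : V, {y | Adj x y}.Finite)
    (b : ℕ) (hb : 2 ≤ b)
    (R : ∀ x : V, Set (↥{y | Adj x y} → Fin b))
    (Δ : ℕ)
    (hrelfin : ∀ x : V, {y | ({z | Adj x z} ∩ {z | Adj y z}).Nonempty}.Finite)
    (hbdd : BddAbove (Set.range fun x : V => {y | ({z | Adj x z} ∩ {z | Adj y z}).Nonempty}.ncard))
    (hΔ : Δ = sSup (Set.range fun x : V => {y | ({z | Adj x z} ∩ {z | Adj y z}).Nonempty}.ncard))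
    (hp : ∀ x : V,
      1 - ((R x).ncard : ℝ) / (b : ℝ) ^ ({y | Adj x y}.ncard) < 1 / (Real.exp 1 * Δ)) :
    ∃ f : V → Fin b, ∀ x : V, (fun y : ↥{y | Adj x y} => f y.val) ∈ R x := by
  classical
  haveI : NeZero b := ⟨by omega⟩
  have hbpos : (0 : ℝ) < b := by exact_mod_cast (by omega : 0 < b)
  haveI hfinN : ∀ x, Finite ↥{y | Adj x y} := fun x => (hloc x)
  have hcardN : ∀ x, Nat.card (↥{y | Adj x y} → Fin b) = b ^ ({y | Adj x y}.ncard) := by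
    intro x
    rw [Nat.card_fun, Nat.card_fin]
    rfl
  have hRc : ∀ x, (R x).ncard + (R x)ᶜ.ncard = b ^ ({y | Adj x y}.ncard) := by
    intro x
    rw [Set.ncard_add_ncard_compl, hcardN]
  have hpx : ∀ x, ((R x)ᶜ.ncard : ℝ) < 1 / (Real.exp 1 * Δ) * (b : ℝ) ^ ({y | Adj x y}.ncard) := by
    intro x
    have h1 : ((R x).ncard : ℝ) + ((R x)ᶜ.ncard : ℝ) = (b : ℝ) ^ ({y | Adj x y}.ncard) := by
      exact_mod_cast hRc x
    have h2 : (0 : ℝ) < (b : ℝ) ^ ({y | Adj x y}.ncard) := by positivity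
    have h3 := mul_lt_mul_of_pos_right (hp x) h2
    rw [sub_mul, div_mul_cancel₀ _ h2.ne'] at h3
    linarith
  rcases isEmpty_or_nonempty V with hV | ⟨⟨x0⟩⟩
  · exact ⟨fun v => hV.elim v, fun v => hV.elim v⟩
  have hΔ0 : Δ ≠ 0 := by
    rintro rfl
    have h := hpx x0
    simp only [Nat.cast_zero, mul_zero, div_zero, zero_mul] at h
    exact absurd h (not_lt.2 (by positivity))
  obtain ⟨d, rfl⟩ := Nat.exists_eq_succ_of_ne_zero hΔ0
  obtain ⟨q, hq0, hq1, hq⟩ := lll_param d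
  set p : ℝ := 1 / (Real.exp 1 * ((d + 1 : ℕ) : ℝ)) with hpdef
  have hp0 : 0 ≤ p := by positivity
  let D : V → Finset V := fun x => (hrelfin x).toFinset
  have hDcard : ∀ x, (D x).card ≤ d + 1 := by
    intro x
    have h := le_csSup hbdd ⟨x, rfl⟩
    rw [← hΔ] at h
    rw [← Set.ncard_eq_toFinset_card _ (hrelfin x)]
    exact h
  have hDx : ∀ x, ((D x).erase x).card ≤ d := by
    intro x
    by_cases hx : x ∈ D x
    · rw [Finset.card_erase_of_mem hx]
      have := hDcard x
      omega
    · have : D x = ∅ := by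
        rw [Finset.eq_empty_iff_forall_notMem]
        intro y hy
        apply hx
        simp only [D, Set.Finite.mem_toFinset, Set.mem_setOf_eq] at hy ⊢
        obtain ⟨z, hz, -⟩ := hy
        exact ⟨z, hz, hz⟩
      simp [this]
  -- finite satisfiability
  have hfinsat : ∀ S : Finset V, ∃ f : V → Fin b, ∀ x ∈ S,
      (fun y : ↥{y | Adj x y} => f y.val) ∈ R x := by
    intro S
    let W : Finset V := S.biUnion fun x => (hloc x).toFinset
    have hNW : ∀ x ∈ S, ∀ y, Adj x y → y ∈ W := by
      intro x hx y hy
      simp only [W, Finset.mem_biUnion]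
      exact ⟨x, hx, by simpa using hy⟩
    let ex : (W → Fin b) → V → Fin b := fun g v => if h : v ∈ W then g ⟨v, h⟩ else 0
    let A : V → Set (W → Fin b) := fun x => {g | (fun y : ↥{y | Adj x y} => ex g y.val) ∉ R x}
    have hAdep : ∀ x, ∀ f g : W → Fin b, (∀ w : W, Adj x w → f w = g w) → f ∈ A x → g ∈ A x := by
      intro x f g hfg hf
      have : (fun y : ↥{y | Adj x y} => ex g y.val) = fun y : ↥{y | Adj x y} => ex f y.val := by
        funext y
        simp only [ex]
        split_ifs with h
        · exact (hfg ⟨y, h⟩ y.2).symm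
        · rfl
      simp only [A, Set.mem_setOf_eq] at hf ⊢
      rwa [this]
    have hΩ : (0 : ℝ) < Nat.card (W → Fin b) := by exact_mod_cast Nat.card_pos
    have hAcard : ∀ x ∈ S, ((A x).ncard : ℝ) ≤ p * Nat.card (W → Fin b) := by
      intro x hx
      have h1 := lll_cyl (C := Fin b) (fun y : ↥{y | Adj x y} => (⟨y.1, hNW x hx y.1 y.2⟩ : W))
        (by intro y z h; ext; simpa using h) (R x)ᶜ
      have e : {g : W → Fin b | g ∘ (fun y : ↥{y | Adj x y} => (⟨y.1, hNW x hx y.1 y.2⟩ : W))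
          ∈ (R x)ᶜ} = A x := by
        ext g
        have : (fun y : ↥{y | Adj x y} => ex g y.val) =
            g ∘ (fun y : ↥{y | Adj x y} => (⟨y.1, hNW x hx y.1 y.2⟩ : W)) := by
          funext y
          simp only [ex, Function.comp]
          rw [dif_pos (hNW x hx y.1 y.2)]
        simp only [A, Set.mem_setOf_eq, this, Set.mem_compl_iff]
      rw [e, hcardN] at h1
      have h2 : ((A x).ncard : ℝ) * (b : ℝ) ^ ({y | Adj x y}.ncard)
          ≤ ((R x)ᶜ.ncard : ℝ) * Nat.card (W → Fin b) := by exact_mod_cast h1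
      have h3 : (0 : ℝ) < (b : ℝ) ^ ({y | Adj x y}.ncard) := by positivity
      have h4 := mul_le_mul_of_nonneg_right (hpx x).le hΩ.le
      refine le_of_mul_le_mul_right ?_ h3
      calc _ ≤ _ := h2
        _ ≤ _ := h4
        _ = _ := by rw [hpdef]; ring
    have hind : ∀ x ∈ S, ∀ T ⊆ S, Disjoint T (D x) →
        ((A x ∩ lllAvoid A T).ncard : ℝ) ≤ p * (lllAvoid A T).ncard := by
      intro x hx T hT hdisj
      have h1 := lll_indep {w : W | Adj x w} (A x) (lllAvoid A T)
        (fun f g h => hAdep x f g h) (by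
          intro f g hfg hf y hy hg
          refine hf y hy (hAdep y g f ?_ hg)
          intro w hw
          refine (hfg w ?_).symm
          intro hxw
          refine Finset.disjoint_left.1 hdisj hy ?_
          simp only [D, Set.Finite.mem_toFinset, Set.mem_setOf_eq]
          exact ⟨w, hxw, hw⟩)
      have h2 : ((A x ∩ lllAvoid A T).ncard : ℝ) * Nat.card (W → Fin b)
          ≤ (A x).ncard * (lllAvoid A T).ncard := by exact_mod_cast h1
      refine le_of_mul_le_mul_right ?_ hΩ
      have h3 := mul_le_mul_of_nonneg_right (hAcard x hx)
        (Nat.cast_nonneg (α := ℝ) (lllAvoid A T).ncard)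
      linarith
    have key := lll_abstract A D d p q hq0 hq1 hq hDx S hind
    rw [← Nat.card_eq_fintype_card] at key
    have hpos : (0 : ℝ) < (lllAvoid A S).ncard :=
      lt_of_lt_of_le (mul_pos (pow_pos (by linarith) _) hΩ) key
    have hne : (lllAvoid A S).Nonempty := by
      rw [← Set.ncard_pos]
      exact_mod_cast hpos
    obtain ⟨g, hg⟩ := hne
    refine ⟨ex g, fun x hx => ?_⟩
    by_contra hcon
    exact hg x hx hcon
  -- compactness
  have hcl : ∀ x, IsClosed {f : V → Fin b | (fun y : ↥{y | Adj x y} => f y.val) ∈ R x} := by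
    intro x
    have hc : Continuous (fun (f : V → Fin b) (y : ↥{y | Adj x y}) => f y.val) := by fun_prop
    exact (isClosed_discrete (R x)).preimage hc
  have hne := isCompact_univ.inter_iInter_nonempty
    (fun x => {f : V → Fin b | (fun y : ↥{y | Adj x y} => f y.val) ∈ R x}) hcl (by
      intro u
      obtain ⟨f, hf⟩ := hfinsat u
      exact ⟨f, trivial, by simpa using hf⟩)
  obtain ⟨f, -, hf⟩ := hne
  exact ⟨f, fun x => by simpa using Set.mem_iInter.1 hf x⟩
end

section
/- Let n ≥ 1, let T ⊆ ℝ^n be a finite nonempty set of vectors, and let b ≥ 1 be an integer such that b·(1 − 1/b)^{|T|} < 1/(e·|T|²), where e is Euler's number. Then there exists a b-coloring f : ℝ^n → {0,…,b−1} such that for every x ∈ ℝ^n the set x + T is multicolored, i.e., for every color c ∈ {0,…,b−1} there exists t ∈ T with f(x+t) = c. -/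
open Classical in
/-- Number of outcomes satisfying a predicate, as a real. -/
noncomputable def cnt {Ω : Type*} [Fintype Ω] (P : Ω → Prop) : ℝ :=
  ((Finset.univ.filter P).card : ℝ)

lemma cnt_nonneg {Ω : Type*} [Fintype Ω] (P : Ω → Prop) : 0 ≤ cnt P := by
  unfold cnt; positivity

lemma cnt_mono {Ω : Type*} [Fintype Ω] {P Q : Ω → Prop} (h : ∀ w, P w → Q w) :
    cnt P ≤ cnt Q := by
  classical
  unfold cnt
  exact_mod_cast Finset.card_le_card (by
    intro w hw
    simp only [Finset.mem_filter, Finset.mem_univ, true_and] at hw ⊢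
    exact h w hw)

lemma cnt_split {Ω : Type*} [Fintype Ω] (P Q : Ω → Prop) :
    cnt Q = cnt (fun w => P w ∧ Q w) + cnt (fun w => ¬ P w ∧ Q w) := by
  classical
  unfold cnt
  rw [← Nat.cast_add, ← Finset.card_filter_add_card_filter_not (s := Finset.univ.filter Q) P,
    Finset.filter_filter, Finset.filter_filter]
  simp only [and_comm]
  congr!

lemma cnt_eq_zero {Ω : Type*} [Fintype Ω] (P : Ω → Prop) (h : ∀ w, ¬ P w) : cnt P = 0 := by
  simp [cnt, h]

lemma exp_bound (m : ℕ) (hm : 1 ≤ m) :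
    Real.exp (-1) ≤ (1 - 1 / ((m : ℝ) + 1)) ^ m := by
  have hm' : (0 : ℝ) < m := by exact_mod_cast hm
  have h1 : Real.exp (-1) = (Real.exp (-(1 / (m : ℝ)))) ^ m := by
    rw [← Real.exp_nat_mul]; congr 1; field_simp
  rw [h1]
  apply pow_le_pow_left₀ (Real.exp_pos _).le
  rw [Real.exp_neg]
  have h2 := Real.add_one_le_exp (1 / (m : ℝ))
  have h3 : 1 - 1 / ((m : ℝ) + 1) = (1 / (m : ℝ) + 1)⁻¹ := by field_simp; ring
  rw [h3]
  exact inv_anti₀ (by positivity) h2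

/-- Symmetric Lovász local lemma, counting form. -/
lemma lll {ι Ω : Type*} [DecidableEq ι] [Fintype Ω] [Nonempty Ω]
    (A : ι → Ω → Prop) (nbr : ι → ι → Prop) (p : ℝ) (m : ℕ) (hm : 1 ≤ m)
    (hp : Real.exp 1 * p * ((m : ℝ) + 1) ≤ 1)
    (hdeg : ∀ x (J : Finset ι), x ∉ J → (∀ y ∈ J, nbr x y) → J.card ≤ m)
    (hind : ∀ x (J : Finset ι), (∀ y ∈ J, ¬ nbr x y) →
      cnt (fun w => A x w ∧ ∀ y ∈ J, ¬ A y w) ≤ p * cnt (fun w => ∀ y ∈ J, ¬ A y w))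
    (J : Finset ι) : ∃ w, ∀ y ∈ J, ¬ A y w := by
  classical
  have hm0 : (0 : ℝ) < m := by exact_mod_cast hm
  set r : ℝ := 1 / ((m : ℝ) + 1) with hr
  have hr1 : r < 1 := by rw [hr, div_lt_one (by positivity)]; linarith
  have hr0 : 0 < r := by positivity
  set G : Finset ι → ℝ := fun J => cnt (fun w => ∀ y ∈ J, ¬ A y w) with hG
  have hG0 : ∀ J, 0 ≤ G J := fun J => cnt_nonneg _
  have hins : ∀ x (J : Finset ι),
      G J = cnt (fun w => A x w ∧ ∀ y ∈ J, ¬ A y w) + G (insert x J) := by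
    intro x J
    rw [hG]; simp only [Finset.forall_mem_insert]
    exact cnt_split (A x) _
  have key : ∀ N : ℕ, ∀ J : Finset ι, J.card ≤ N → ∀ x, x ∉ J →
      cnt (fun w => A x w ∧ ∀ y ∈ J, ¬ A y w) ≤ r * G J := by
    intro N
    induction N using Nat.strong_induction_on with
    | _ N ih =>
    intro J hJ x hx
    set J1 := J.filter (nbr x) with hJ1
    set J2 := J.filter (fun y => ¬ nbr x y) with hJ2
    have hle : cnt (fun w => A x w ∧ ∀ y ∈ J, ¬ A y w) ≤ p * G J2 := by
      refine le_trans (cnt_mono ?_) (hind x J2 (by simp [hJ2]))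
      rintro w ⟨h1, h2⟩
      exact ⟨h1, fun y hy => h2 y (Finset.mem_filter.1 hy).1⟩
    have hc1 : J1.card ≤ m :=
      hdeg x J1 (fun h => hx (Finset.mem_filter.1 h).1) (fun y hy => (Finset.mem_filter.1 hy).2)
    have step : ∀ K : Finset ι, K ⊆ J1 → (1 - r) ^ K.card * G J2 ≤ G (K ∪ J2) := by
      intro K
      induction K using Finset.induction_on with
      | empty => intro _; simp
      | insert y K hy ihK =>
        intro hK
        have hyJ1 : y ∈ J1 := hK (Finset.mem_insert_self _ _)
        have hK' : K ⊆ J1 := fun z hz => hK (Finset.mem_insert_of_mem hz)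
        have hyn : y ∉ K ∪ J2 := by
          simp only [Finset.mem_union, not_or]
          refine ⟨hy, fun h => (Finset.mem_filter.1 h).2 (Finset.mem_filter.1 hyJ1).2⟩
        have hsub : K ∪ J2 ⊂ J := by
          refine (Finset.ssubset_iff_of_subset ?_).2 ⟨y, (Finset.mem_filter.1 hyJ1).1, hyn⟩
          exact Finset.union_subset (hK'.trans (Finset.filter_subset _ _))
            (Finset.filter_subset _ _)
        have h1 := ih (K ∪ J2).card (lt_of_lt_of_le (Finset.card_lt_card hsub) hJ) (K ∪ J2)
          le_rfl y hyn
        have h2 := hins y (K ∪ J2)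
        have h3 := ihK hK'
        rw [Finset.card_insert_of_notMem hy, Finset.insert_union, pow_succ]
        have h4 : (1 - r) * ((1 - r) ^ K.card * G J2) ≤ (1 - r) * G (K ∪ J2) :=
          mul_le_mul_of_nonneg_left h3 (by linarith)
        nlinarith
    have h5 := step J1 (subset_refl _)
    have h6 : J1 ∪ J2 = J := Finset.filter_union_filter_not_eq _ _
    rw [h6] at h5
    have h7 : Real.exp (-1) ≤ (1 - r) ^ J1.card :=
      (exp_bound m hm).trans (pow_le_pow_of_le_one (by linarith) (by linarith) hc1)
    have h8 : Real.exp (-1) * G J2 ≤ G J := (mul_le_mul_of_nonneg_right h7 (hG0 _)).trans h5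
    have h9 : p ≤ r * Real.exp (-1) := by
      rw [hr, Real.exp_neg, div_mul_eq_mul_div, one_mul, le_div_iff₀ (by positivity),
        ← one_div, le_div_iff₀ (Real.exp_pos _)]
      linarith
    calc _ ≤ p * G J2 := hle
      _ ≤ r * Real.exp (-1) * G J2 := mul_le_mul_of_nonneg_right h9 (hG0 _)
      _ = r * (Real.exp (-1) * G J2) := by ring
      _ ≤ r * G J := mul_le_mul_of_nonneg_left h8 hr0.le
  have pos : ∀ J : Finset ι, 0 < G J := by
    intro J
    induction J using Finset.induction_on with
    | empty => simp [hG, cnt, Fintype.card_pos]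
    | insert y K hy ihK =>
      have h1 := key _ K le_rfl y hy
      have h2 := hins y K
      nlinarith
  by_contra hcon
  push Not at hcon
  have h0 := pos J
  have : G J = 0 := by
    refine cnt_eq_zero _ ?_
    intro w hw
    obtain ⟨y, hy, hA⟩ := hcon w
    exact hw y hy hA
  linarith

lemma cnt_indep {V β : Type*} [Fintype V] [DecidableEq V] [Fintype β] (U : Finset V)
    (P Q : (V → β) → Prop)
    (hP : ∀ w w', (∀ v ∈ U, w v = w' v) → P w → P w')
    (hQ : ∀ w w', (∀ v, v ∉ U → w v = w' v) → Q w → Q w') :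
    cnt (fun w => P w ∧ Q w) * cnt (fun _ : V → β => True) = cnt P * cnt Q := by
  classical
  unfold cnt
  rw [← Nat.cast_mul, ← Nat.cast_mul, ← Finset.card_product, ← Finset.card_product]
  congr 1
  let s : (V → β) × (V → β) → (V → β) × (V → β) := fun z =>
    (fun v => if v ∈ U then z.1 v else z.2 v, fun v => if v ∈ U then z.2 v else z.1 v)
  have hs : ∀ z, s (s z) = z := by
    intro z
    ext v <;> by_cases h : v ∈ U <;> simp [s, h]
  refine Finset.card_nbij' s s ?_ ?_ (fun z _ => hs z) (fun z _ => hs z)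
  · rintro ⟨w, w'⟩ hz
    simp only [Finset.coe_product, Set.mem_prod, Finset.mem_coe, Finset.mem_filter,
      Finset.mem_univ, true_and, and_true] at hz ⊢
    exact ⟨hP w _ (fun v hv => by simp [s, hv]) hz.1, hQ w _ (fun v hv => by simp [s, hv]) hz.2⟩
  · rintro ⟨w, w'⟩ hz
    simp only [Finset.coe_product, Set.mem_prod, Finset.mem_coe, Finset.mem_filter,
      Finset.mem_univ, true_and, and_true] at hz ⊢
    exact ⟨hP w _ (fun v hv => by simp [s, hv]) hz.1, hQ w' _ (fun v hv => by simp [s, hv]) hz.2⟩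

lemma cnt_miss {V : Type*} [Fintype V] [DecidableEq V] (b : ℕ) (hb : 1 ≤ b) (U : Finset V) :
    cnt (fun w : V → Fin b => ∃ c, ∀ v ∈ U, w v ≠ c) ≤
      (b : ℝ) * (1 - 1 / (b : ℝ)) ^ U.card * cnt (fun _ : V → Fin b => True) := by
  classical
  have hb0 : (b : ℝ) ≠ 0 := by positivity
  have h1 : ∀ c : Fin b, (((Fintype.piFinset (fun v : V => if v ∈ U then Finset.univ.erase c
      else Finset.univ)).card : ℕ) : ℝ) = (1 - 1 / (b : ℝ)) ^ U.card * (b : ℝ) ^ Fintype.card V := by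
    intro c
    rw [Fintype.card_piFinset, Nat.cast_prod]
    have : ∀ v : V, (((if v ∈ U then Finset.univ.erase c else Finset.univ : Finset (Fin b)).card : ℕ) : ℝ)
        = (if v ∈ U then (1 - 1 / (b : ℝ)) else 1) * b := by
      intro v
      split_ifs
      · rw [Finset.card_erase_of_mem (Finset.mem_univ _), Finset.card_univ, Fintype.card_fin,
          Nat.cast_sub hb]
        field_simp
        simp
      · simp
    rw [Finset.prod_congr rfl (fun v _ => this v), Finset.prod_mul_distrib]
    simp [Finset.prod_ite_mem]
  have h2 : cnt (fun _ : V → Fin b => True) = (b : ℝ) ^ Fintype.card V := by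
    simp [cnt]
  have h3 : cnt (fun w : V → Fin b => ∃ c, ∀ v ∈ U, w v ≠ c) ≤
      ∑ c : Fin b, (((Fintype.piFinset (fun v : V => if v ∈ U then Finset.univ.erase c
      else Finset.univ)).card : ℕ) : ℝ) := by
    unfold cnt
    rw [← Nat.cast_sum]
    refine Nat.cast_le.2 (le_trans (Finset.card_le_card ?_) Finset.card_biUnion_le)
    intro w hw
    simp only [Finset.mem_filter, Finset.mem_univ, true_and] at hw
    obtain ⟨c, hc⟩ := hw
    simp only [Finset.mem_biUnion, Finset.mem_univ, true_and, Fintype.mem_piFinset]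
    refine ⟨c, fun v => ?_⟩
    split_ifs with h
    · simp [hc v h]
    · simp
  refine h3.trans (le_of_eq ?_)
  rw [Finset.sum_congr rfl (fun c _ => h1 c), h2]
  simp
  ring

lemma finite_case {E : Type*} [AddCommGroup E] [DecidableEq E] (T : Finset E) (hT : 2 ≤ T.card)
    (b : ℕ) (hb : 1 ≤ b)
    (hineq : (b : ℝ) * (1 - 1 / (b : ℝ)) ^ T.card
      < 1 / (Real.exp 1 * (T.card : ℝ) ^ 2)) (F : Finset E) :
    ∃ f : E → Fin b, ∀ x ∈ F, ∀ c : Fin b, ∃ t ∈ T, f (x + t) = c := by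
  classical
  haveI : NeZero b := ⟨by omega⟩
  set S : Finset E := (F ×ˢ T).image (fun z => z.1 + z.2) with hS
  have hmemS : ∀ x ∈ F, ∀ t ∈ T, x + t ∈ S := fun x hx t ht =>
    Finset.mem_image.2 ⟨(x, t), Finset.mk_mem_product hx ht, rfl⟩
  let U : F → Finset S := fun x => Finset.univ.filter (fun v : S => v.1 - x.1 ∈ T)
  have hU : ∀ x, (U x).card = T.card := by
    intro x
    symm
    refine Finset.card_bij (fun t ht => ⟨x.1 + t, hmemS x.1 x.2 t ht⟩) ?_ ?_ ?_
    · intro t ht; simp [U, ht]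
    · intro t _ t' _ h; simpa using h
    · intro v hv
      refine ⟨v.1 - x.1, (Finset.mem_filter.1 hv).2, ?_⟩
      ext; simp
  let A : F → (S → Fin b) → Prop := fun x w => ∃ c, ∀ v ∈ U x, w v ≠ c
  let nbr : F → F → Prop := fun x y => ¬ Disjoint (U x) (U y)
  have h4 : 4 ≤ T.card ^ 2 := by nlinarith
  have hm : ((T.card ^ 2 - 1 : ℕ) : ℝ) + 1 = (T.card : ℝ) ^ 2 := by
    rw [Nat.cast_sub (by omega)]; push_cast; ring
  obtain ⟨w, hw⟩ := lll A nbr ((b : ℝ) * (1 - 1 / (b : ℝ)) ^ T.card) (T.card ^ 2 - 1) (by omega)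
    (by
      rw [hm]
      have hk : (0 : ℝ) < T.card := by positivity
      rw [lt_div_iff₀ (by positivity)] at hineq
      linarith)
    (by
      intro x J hx hJ
      have hsub : (insert x J).image (fun y => y.1 - x.1) ⊆
          (T ×ˢ T).image (fun z => z.1 - z.2) := by
        intro d hd
        obtain ⟨y, hy, rfl⟩ := Finset.mem_image.1 hd
        have hy' : nbr x y := by
          rcases Finset.mem_insert.1 hy with rfl | h
          · simp only [nbr, disjoint_self, Finset.bot_eq_empty]
            intro h0
            have := hU y
            rw [h0, Finset.card_empty] at this
            omega
          · exact hJ y h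
        obtain ⟨v, hv1, hv2⟩ := Finset.not_disjoint_iff.1 hy'
        refine Finset.mem_image.2 ⟨(v.1 - x.1, v.1 - y.1), Finset.mk_mem_product
          (Finset.mem_filter.1 hv1).2 (Finset.mem_filter.1 hv2).2, ?_⟩
        simp
      have hc := (Finset.card_le_card hsub).trans Finset.card_image_le
      rw [Finset.card_image_of_injective, Finset.card_insert_of_notMem hx,
        Finset.card_product, ← pow_two] at hc
      · omega
      · intro y z h
        exact Subtype.ext (by simpa using h))
    (by
      intro x J hJ
      have hi := cnt_indep (U x) (A x) (fun w => ∀ y ∈ J, ¬ A y w)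
        (by
          rintro w w' h ⟨c, hc⟩
          exact ⟨c, fun v hv => h v hv ▸ hc v hv⟩)
        (by
          rintro w w' h hg y hy ⟨c, hc⟩
          refine hg y hy ⟨c, fun v hv => ?_⟩
          have hd : Disjoint (U x) (U y) := not_not.1 (hJ y hy)
          rw [h v (fun hvx => Finset.disjoint_left.1 hd hvx hv)]
          exact hc v hv)
      have hmiss := cnt_miss b hb (U x)
      rw [hU x] at hmiss
      have hpos : 0 < cnt (fun _ : S → Fin b => True) := by
        simp only [cnt, Finset.filter_true, Finset.card_univ]
        exact_mod_cast Fintype.card_pos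
      have h5 := mul_le_mul_of_nonneg_right hmiss
        (cnt_nonneg (fun w : S → Fin b => ∀ y ∈ J, ¬ A y w))
      refine le_of_mul_le_mul_right ?_ hpos
      rw [hi]
      refine h5.trans (le_of_eq ?_)
      ring)
    Finset.univ
  refine ⟨fun e => if h : e ∈ S then w ⟨e, h⟩ else 0, fun x hx c => ?_⟩
  have hg := hw ⟨x, hx⟩ (Finset.mem_univ _)
  simp only [A] at hg
  push Not at hg
  obtain ⟨v, hv, hvc⟩ := hg c
  refine ⟨v.1 - x, (Finset.mem_filter.1 hv).2, ?_⟩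
  simp [hvc]

/-- Corollary 1.2 of the paper (Erdős–Lovász).  If `T ⊆ ℝⁿ` is a finite nonempty set of vectors
and `b ≥ 1` satisfies `b·(1 − 1/b)^|T| < 1/(e·|T|²)`, then there is a `b`-coloring
`f : ℝⁿ → {0,…,b−1}` such that every translate `x + T` is multicolored. -/
theorem multicolored_translates (n : ℕ) (hn : 1 ≤ n)
    (T : Finset (Fin n → ℝ)) (hT : T.Nonempty)
    (b : ℕ) (hb : 1 ≤ b)
    (hineq : (b : ℝ) * (1 - 1 / (b : ℝ)) ^ T.card
      < 1 / (Real.exp 1 * (T.card : ℝ) ^ 2)) :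
    ∃ f : (Fin n → ℝ) → Fin b,
      ∀ x : Fin n → ℝ, ∀ c : Fin b, ∃ t ∈ T, f (x + t) = c := by
  classical
  rcases Nat.lt_or_ge 1 T.card with hT2 | hT1
  · let C : (Fin n → ℝ) → Set ((Fin n → ℝ) → Fin b) := fun x =>
      {f | ∀ c : Fin b, ∃ t ∈ T, f (x + t) = c}
    have hC : ∀ x, IsClosed (C x) := by
      intro x
      have : C x = ⋂ c : Fin b, ⋃ t ∈ T, {f | f (x + t) = c} := by
        ext f; simp [C]
      rw [this]
      refine isClosed_iInter fun c => ?_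
      refine T.finite_toSet.isClosed_biUnion fun t _ => ?_
      exact isClosed_eq (continuous_apply _) continuous_const
    have hne : (⋂ x, C x).Nonempty := by
      refine CompactSpace.iInter_nonempty hC fun F => ?_
      obtain ⟨f, hf⟩ := finite_case T hT2 b hb hineq F
      exact ⟨f, Set.mem_iInter₂.2 hf⟩
    obtain ⟨f, hf⟩ := hne
    exact ⟨f, fun x => Set.mem_iInter.1 hf x⟩
  · have h1 : T.card = 1 := le_antisymm hT1 hT.card_pos
    have hb1 : b = 1 := by
      by_contra hne
      have h2 : (2 : ℝ) ≤ b := by exact_mod_cast (by omega : 2 ≤ b)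
      rw [h1] at hineq
      have h3 : (b : ℝ) * (1 - 1 / (b : ℝ)) ^ 1 = b - 1 := by field_simp
      rw [h3] at hineq
      have h4 : 1 / (Real.exp 1 * ((1 : ℕ) : ℝ) ^ 2) ≤ 1 := by
        have := Real.add_one_le_exp (1 : ℝ)
        rw [div_le_one (by positivity)]
        norm_num at this ⊢
      linarith
    subst hb1
    obtain ⟨t, ht⟩ := hT
    exact ⟨fun _ => 0, fun x c => ⟨t, ht, Subsingleton.elim _ _⟩⟩
end

section
/- Let n ≥ 1, let T ⊆ ℝ^n be a finite nonempty set of vectors, and let b ≥ 1 be an integer such that b·(1 − 1/b)^{|T|} < 1/(e·|T|²), where e is Euler's number. Then there exists a Borel measurable b-coloring f : ℝ^n → {0,…,b−1} such that for every x ∈ ℝ^n the set x + T is multicolored, i.e., for every color c ∈ {0,…,b−1} there exists t ∈ T with f(x+t) = c. -/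
open MeasureTheory in
/-- A scaling of finitely many nonzero reals staying away from the integers. -/
lemma bmt_exists_scale (A : Finset ℝ) (hA : ∀ a ∈ A, a ≠ 0) (N : ℕ) (hN : 5 * A.card + 1 ≤ N) :
    ∃ s : ℝ, ∀ a ∈ A, ∀ k : ℤ, 1 / (N : ℝ) ≤ |s * a - k| := by
  have hNpos : (0 : ℝ) < N := by
    have : 0 < N := by omega
    exact_mod_cast this
  set η : ℝ := 1 / (N : ℝ) with hη
  have hηpos : 0 < η := by positivity
  have hη1 : η ≤ 1 := by
    rw [hη, div_le_one hNpos]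
    have : 1 ≤ N := by omega
    exact_mod_cast this
  set S : ℝ := ∑ a ∈ A, 10 / |a| + 1 with hS
  have hsum0 : 0 ≤ ∑ a ∈ A, 10 / |a| := Finset.sum_nonneg (fun a _ => by positivity)
  have hSpos : 0 < S := by linarith
  have hSa : ∀ a ∈ A, 10 / |a| ≤ S := by
    intro a ha
    have := Finset.single_le_sum (f := fun a : ℝ => 10 / |a|) (fun a _ => by positivity) ha
    linarith
  by_contra hcon
  push Not at hcon
  let K : ℝ → ℤ := fun a => ⌈S * |a|⌉ + 1
  have hcover : Set.Icc (0 : ℝ) S ⊆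
      ⋃ a ∈ A, ⋃ k ∈ Finset.Icc (-(K a)) (K a), Metric.ball ((k : ℝ) / a) (η / |a|) := by
    intro s hs
    obtain ⟨a, ha, k, hk⟩ := hcon s
    have ha0 := hA a ha
    have hapos : 0 < |a| := abs_pos.mpr ha0
    have hsa : |s * a| ≤ S * |a| := by
      rw [abs_mul, abs_of_nonneg hs.1]
      exact mul_le_mul_of_nonneg_right hs.2 hapos.le
    simp only [Set.mem_iUnion]
    refine ⟨a, ha, k, ?_, ?_⟩
    · have h1 := abs_lt.mp hk
      have h2 := abs_le.mp hsa
      have h3 := Int.le_ceil (S * |a|)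
      rw [Finset.mem_Icc]
      constructor
      · have : (-(K a) : ℝ) ≤ k := by
          simp only [K]; push_cast; linarith
        exact_mod_cast this
      · have : (k : ℝ) ≤ K a := by
          simp only [K]; push_cast; linarith
        exact_mod_cast this
    · rw [Metric.mem_ball, Real.dist_eq, lt_div_iff₀ hapos, ← abs_mul, sub_mul, div_mul_cancel₀ _ ha0]
      exact hk
  have hvol : volume (Set.Icc (0 : ℝ) S) ≤
      ∑ a ∈ A, ∑ k ∈ Finset.Icc (-(K a)) (K a), ENNReal.ofReal (2 * (η / |a|)) := by
    refine (measure_mono hcover).trans ?_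
    refine (measure_biUnion_finset_le _ _).trans ?_
    refine Finset.sum_le_sum fun a _ => ?_
    refine (measure_biUnion_finset_le _ _).trans ?_
    refine Finset.sum_le_sum fun k _ => ?_
    rw [Real.volume_ball]
  rw [Real.volume_Icc, sub_zero] at hvol
  have hvol2 : S ≤ ∑ a ∈ A, ∑ k ∈ Finset.Icc (-(K a)) (K a), (2 * (η / |a|)) := by
    have hnn : ∀ a : ℝ, 0 ≤ 2 * (η / |a|) := fun a => by positivity
    have h := hvol
    have e : ∀ a ∈ A, ∑ k ∈ Finset.Icc (-(K a)) (K a), ENNReal.ofReal (2 * (η / |a|)) =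
        ENNReal.ofReal (∑ k ∈ Finset.Icc (-(K a)) (K a), (2 * (η / |a|))) := fun a _ =>
      (ENNReal.ofReal_sum_of_nonneg (fun _ _ => hnn a)).symm
    rw [Finset.sum_congr rfl e, ← ENNReal.ofReal_sum_of_nonneg
      (fun a _ => Finset.sum_nonneg (fun _ _ => hnn a))] at h
    exact (ENNReal.ofReal_le_ofReal_iff
      (Finset.sum_nonneg fun a _ => Finset.sum_nonneg (fun _ _ => hnn a))).mp h
  have hterm : ∀ a ∈ A, ∑ k ∈ Finset.Icc (-(K a)) (K a), (2 * (η / |a|)) ≤ 5 * η * S := by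
    intro a ha
    have hapos : 0 < |a| := abs_pos.mpr (hA a ha)
    rw [Finset.sum_const, Int.card_Icc, nsmul_eq_mul]
    have hK0 : 0 ≤ K a := by
      have : 0 ≤ ⌈S * |a|⌉ := Int.ceil_nonneg (by positivity)
      simp only [K]; omega
    have hc : ((K a + 1 - -(K a)).toNat : ℝ) = 2 * (K a : ℝ) + 1 := by
      have : ((K a + 1 - -(K a)).toNat : ℤ) = 2 * K a + 1 := by omega
      exact_mod_cast this
    rw [hc]
    have hKle : (K a : ℝ) ≤ S * |a| + 2 := by
      have := (Int.ceil_lt_add_one (S * |a|)).le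
      simp only [K]; push_cast; linarith
    have h10 := hSa a ha
    rw [div_le_iff₀ hapos] at h10
    calc (2 * (K a : ℝ) + 1) * (2 * (η / |a|)) ≤ (2 * (S * |a| + 2) + 1) * (2 * (η / |a|)) := by
          gcongr
      _ = η * ((4 * (S * |a|) + 10) / |a|) := by ring
      _ ≤ η * ((5 * (S * |a|)) / |a|) := by gcongr; linarith
      _ = 5 * η * S := by field_simp
  have h1 := hvol2.trans (Finset.sum_le_sum hterm)
  rw [Finset.sum_const, nsmul_eq_mul] at h1
  have h2 : (A.card : ℝ) * (5 * η) < 1 := by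
    have : ((5 * A.card + 1 : ℕ) : ℝ) ≤ N := by exact_mod_cast hN
    push_cast at this
    rw [hη, mul_one_div, mul_div_assoc', div_lt_one hNpos]
    linarith
  nlinarith

lemma bmt_exists_coloring {n : ℕ} (G G' : Finset (Fin n → ℝ)) (h0 : ∀ g ∈ G', g ≠ 0)
    (N : ℕ) (hN : 5 * G'.card + 1 ≤ N) :
    ∃ c : (Fin n → ℝ) → ZMod N, (∀ i, MeasurableSet (c ⁻¹' {i})) ∧
      (∀ x, ∀ g ∈ G', c (x + g) ≠ c x) ∧
      ∃ key : (Fin n → ℝ) → ZMod N × Fin (G.card + 1),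
        ∀ x x', key x = key x' → ∀ g ∈ G, c (x + g) = c (x' + g) := by
  classical
  have hNpos : (0 : ℝ) < N := by
    have : 0 < N := by omega
    exact_mod_cast this
  obtain ⟨u, hu⟩ := Module.exists_dual_forall_apply_ne_zero (K := ℝ)
    (fun g : G' => (g : Fin n → ℝ)) (fun g => h0 g g.2)
  obtain ⟨s, hs⟩ := bmt_exists_scale (G'.image u) (by
    intro a ha
    obtain ⟨g, hg, rfl⟩ := Finset.mem_image.mp ha
    exact hu ⟨g, hg⟩) N (by
      have := Finset.card_image_le (s := G') (f := u)
      omega)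
  let v : (Fin n → ℝ) →ₗ[ℝ] ℝ := ((N : ℝ) * s) • u
  have hvm : Measurable v := (LinearMap.continuous_of_finiteDimensional v).measurable
  have hvN : ∀ g ∈ G', ∀ k : ℤ, 1 ≤ |v g - N * k| := by
    intro g hg k
    have h := hs (u g) (Finset.mem_image_of_mem _ hg) k
    have e : v g - N * k = N * (s * u g - k) := by
      simp only [v, LinearMap.smul_apply, smul_eq_mul]; ring
    rw [e, abs_mul, abs_of_pos hNpos]
    rwa [div_le_iff₀ hNpos, mul_comm] at h
  refine ⟨fun x => ((⌊v x⌋ : ℤ) : ZMod N), ?_, ?_, ?_⟩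
  · intro i
    have : Measurable fun x => ⌊v x⌋ := hvm.floor
    exact this (t := {z : ℤ | (z : ZMod N) = i}) (by trivial)
  · intro x g hg heq
    simp only at heq
    rw [ZMod.intCast_eq_intCast_iff_dvd_sub] at heq
    obtain ⟨k, hk⟩ := heq
    have h := hvN g hg (-k)
    rw [map_add] at hk
    have h1 := Int.floor_le (v x)
    have h2 := Int.lt_floor_add_one (v x)
    have h3 := Int.floor_le (v x + v g)
    have h4 := Int.lt_floor_add_one (v x + v g)
    have hk' : ((⌊v x⌋ : ℤ) : ℝ) - (⌊v x + v g⌋ : ℤ) = N * k := by exact_mod_cast hk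
    push_cast at h
    have : |v g - N * -k| < 1 := by
      rw [abs_lt]; constructor <;> linarith
    linarith
  · let F : (Fin n → ℝ) → Finset (Fin n → ℝ) :=
      fun x => G.filter (fun g => 1 ≤ Int.fract (v x) + Int.fract (v g))
    have hfl : ∀ x g, g ∈ G → ⌊v (x + g)⌋ = ⌊v x⌋ + ⌊v g⌋ + (if g ∈ F x then 1 else 0) := by
      intro x g hg
      have hx := Int.floor_add_fract (v x)
      have hg' := Int.floor_add_fract (v g)
      have a1 := Int.fract_nonneg (v x)
      have a2 := Int.fract_lt_one (v x)
      have a3 := Int.fract_nonneg (v g)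
      have a4 := Int.fract_lt_one (v g)
      rw [map_add, Int.floor_eq_iff]
      split_ifs with h
      · have h' := (Finset.mem_filter.mp h).2
        push_cast
        constructor <;> linarith
      · have h' : Int.fract (v x) + Int.fract (v g) < 1 := by
          by_contra hh
          exact h (Finset.mem_filter.mpr ⟨hg, not_lt.mp hh⟩)
        push_cast
        constructor <;> linarith
    refine ⟨fun x => (((⌊v x⌋ : ℤ) : ZMod N), ⟨(F x).card, Nat.lt_succ_of_le
      (Finset.card_filter_le _ _)⟩), ?_⟩
    intro x x' hkey g hg
    simp only [Prod.mk.injEq, Fin.mk.injEq] at hkey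
    obtain ⟨hk1, hk2⟩ := hkey
    have hF : F x = F x' := by
      rcases le_total (Int.fract (v x)) (Int.fract (v x')) with h | h
      · refine Finset.eq_of_subset_of_card_le ?_ hk2.ge
        intro g hg
        simp only [F, Finset.mem_filter] at hg ⊢
        exact ⟨hg.1, by linarith [hg.2]⟩
      · symm
        refine Finset.eq_of_subset_of_card_le ?_ hk2.le
        intro g hg
        simp only [F, Finset.mem_filter] at hg ⊢
        exact ⟨hg.1, by linarith [hg.2]⟩
    simp only
    rw [hfl x g hg, hfl x' g hg, hF]
    push_cast
    rw [hk1]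

open Classical in
lemma bmt_sum_biUnion_le {α β : Type*} (s : Finset α) (t : α → Finset β) (f : β → ℝ)
    (hf : ∀ x, 0 ≤ f x) : ∑ x ∈ s.biUnion t, f x ≤ ∑ a ∈ s, ∑ x ∈ t a, f x := by
  induction s using Finset.induction_on with
  | empty => simp
  | insert a s ha ih =>
    rw [Finset.biUnion_insert, Finset.sum_insert ha]
    have h1 := Finset.sum_union_inter (s₁ := t a) (s₂ := s.biUnion t) (f := f)
    have h2 : 0 ≤ ∑ x ∈ t a ∩ s.biUnion t, f x := Finset.sum_nonneg fun x _ => hf x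
    linarith

lemma bmt_count_bad {I σ τ : Type*} [Fintype I] [DecidableEq I]
    (S : Finset σ) (T : Finset τ) (b : ℕ) (hb : 1 ≤ b) (idx : σ → τ → I)
    (inj : ∀ s ∈ S, ∀ t ∈ T, ∀ s' ∈ S, ∀ t' ∈ T, idx s t = idx s' t' → s = s' ∧ t = t')
    (B : Finset (I → Fin b))
    (hB : ∀ R ∈ B, ∀ s ∈ S, ∃ col, ∀ t ∈ T, R (idx s t) ≠ col) :
    (B.card : ℝ) ≤ (b : ℝ) ^ (Fintype.card I) * ((b : ℝ) * (1 - 1 / (b : ℝ)) ^ T.card) ^ S.card := by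
  classical
  have hb0 : (0 : ℝ) < b := by exact_mod_cast hb
  let P : (S → Fin b) → Finset (I → Fin b) := fun col => Fintype.piFinset
    (fun i => Finset.univ.filter (fun v => ∀ s : S, ∀ t ∈ T, idx s t = i → v ≠ col s))
  have hsub : B ⊆ Finset.univ.biUnion P := by
    intro R hR
    have : Nonempty (Fin b) := ⟨⟨0, hb⟩⟩
    choose! col hcol using hB R hR
    rw [Finset.mem_biUnion]
    refine ⟨fun s => col s, Finset.mem_univ _, ?_⟩
    simp only [P, Fintype.mem_piFinset, Finset.mem_filter, Finset.mem_univ, true_and]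
    rintro i s t ht rfl
    exact hcol s s.2 t ht
  let Im : Finset I := (S ×ˢ T).image (fun p => idx p.1 p.2)
  have hIm : Im.card = S.card * T.card := by
    rw [← Finset.card_product]
    apply Finset.card_image_of_injOn
    rintro ⟨s, t⟩ h ⟨s', t'⟩ h' he
    simp only [Finset.coe_product, Set.mem_prod, Finset.mem_coe] at h h'
    obtain ⟨h1, h2⟩ := inj s h.1 t h.2 s' h'.1 t' h'.2 he
    rw [h1, h2]
  have hP : ∀ col, ((P col).card : ℝ) ≤
      (b : ℝ) ^ (Fintype.card I) * ((1 - 1 / (b : ℝ)) ^ T.card) ^ S.card := by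
    intro col
    rw [Fintype.card_piFinset]
    push_cast
    calc ∏ i : I, ((Finset.univ.filter
          (fun v : Fin b => ∀ s : S, ∀ t ∈ T, idx s t = i → v ≠ col s)).card : ℝ)
        ≤ ∏ i : I, (if i ∈ Im then ((b : ℝ) * (1 - 1 / b)) else (b : ℝ)) := by
          refine Finset.prod_le_prod (fun _ _ => by positivity) ?_
          intro i _
          split_ifs with hi
          · obtain ⟨⟨s, t⟩, hst, rfl⟩ := Finset.mem_image.mp hi
            rw [Finset.mem_product] at hst
            have : (Finset.univ.filter (fun v : Fin b => ∀ s' : S, ∀ t' ∈ T,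
                idx s' t' = idx s t → v ≠ col s')) ⊆ Finset.univ.erase (col ⟨s, hst.1⟩) := by
              intro v hv
              simp only [Finset.mem_filter, Finset.mem_univ, true_and] at hv
              exact Finset.mem_erase.mpr ⟨hv ⟨s, hst.1⟩ t hst.2 rfl, Finset.mem_univ _⟩
            have h1 := Finset.card_le_card this
            rw [Finset.card_erase_of_mem (Finset.mem_univ _), Finset.card_univ, Fintype.card_fin] at h1
            have h2 : (b : ℝ) * (1 - 1 / b) = ((b - 1 : ℕ) : ℝ) := by
              rw [Nat.cast_sub hb]; field_simp; simp
            rw [h2]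
            exact_mod_cast h1
          · have := Finset.card_filter_le (Finset.univ : Finset (Fin b))
              (fun v : Fin b => ∀ s : S, ∀ t ∈ T, idx s t = i → v ≠ col s)
            rw [Finset.card_univ, Fintype.card_fin] at this
            exact_mod_cast this
      _ = ∏ i : I, ((b : ℝ) * (if i ∈ Im then (1 - 1 / (b : ℝ)) else 1)) := by
          refine Finset.prod_congr rfl fun i _ => ?_
          split_ifs <;> simp
      _ = (b : ℝ) ^ (Fintype.card I) * ((1 - 1 / (b : ℝ)) ^ T.card) ^ S.card := by
          rw [Finset.prod_mul_distrib, Finset.prod_const, Finset.card_univ,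
            Finset.prod_ite_mem, Finset.univ_inter, Finset.prod_const, hIm, ← pow_mul, mul_comm T.card]
  calc (B.card : ℝ) ≤ ((Finset.univ.biUnion P).card : ℝ) := by
        exact_mod_cast Finset.card_le_card hsub
    _ ≤ ∑ col : S → Fin b, ((P col).card : ℝ) := by exact_mod_cast Finset.card_biUnion_le
    _ ≤ ∑ col : S → Fin b, (b : ℝ) ^ (Fintype.card I) * ((1 - 1 / (b : ℝ)) ^ T.card) ^ S.card :=
        Finset.sum_le_sum fun col _ => hP col
    _ = _ := by
        rw [Finset.sum_const, Finset.card_univ, Fintype.card_fun, Fintype.card_fin,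
          Fintype.card_coe, nsmul_eq_mul, mul_pow]
        push_cast
        ring

/-- Prepend a finset to a sequence of finsets. -/
def bmtCons {V : Type*} (A : Finset V) (f : ℕ → Finset V) : ℕ → Finset V
  | 0 => A
  | k + 1 => f k

open scoped Pointwise in
open Classical in
/-- All layer sequences of depth `k` with top layer `A`. -/
noncomputable def bmtSeqs {V : Type*} [AddCommGroup V] (D : Finset V) :
    ℕ → Finset V → Finset (ℕ → Finset V)
  | 0, A => {bmtCons A (fun _ => ∅)}
  | k + 1, A => (A + D).powerset.biUnion (fun I => (bmtSeqs D k I).image (bmtCons A))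

open scoped Pointwise in
open Classical in
lemma bmt_mem_seqs {V : Type*} [AddCommGroup V] (D : Finset V) (L : ℕ) :
    ∀ J : ℕ → Finset V, (∀ k, J (k + 1) ⊆ J k + D) → (∀ k, L < k → J k = ∅) →
      J ∈ bmtSeqs D L (J 0) := by
  have hc : ∀ J : ℕ → Finset V, J = bmtCons (J 0) (fun k => J (k + 1)) := by
    intro J; funext k; cases k <;> rfl
  induction L with
  | zero =>
    intro J _ h2
    simp only [bmtSeqs, Finset.mem_singleton]
    conv_lhs => rw [hc J]
    congr 1
    funext k
    exact h2 _ (by omega)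
  | succ L ih =>
    intro J h1 h2
    simp only [bmtSeqs, Finset.mem_biUnion, Finset.mem_powerset, Finset.mem_image]
    refine ⟨J 1, h1 0, fun k => J (k + 1), ?_, (hc J).symm⟩
    exact ih (fun k => J (k + 1)) (fun k => h1 (k + 1)) (fun k hk => h2 _ (by omega))

open scoped Pointwise in
open Classical in
lemma bmt_seqs_sum {V : Type*} [AddCommGroup V] (D : Finset V) (q w : ℝ) (hq : 0 ≤ q) (hw : 0 ≤ w)
    (h : q * (1 + w) ^ D.card ≤ w) (L : ℕ) :
    ∀ A : Finset V, ∑ J ∈ bmtSeqs D L A, q ^ (∑ k ∈ Finset.range (L + 1), (J k).card) ≤ w ^ A.card := by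
  have hqw : q ≤ w := by
    refine le_trans ?_ h
    exact le_mul_of_one_le_right hq (one_le_pow₀ (by linarith))
  induction L with
  | zero =>
    intro A
    simp only [bmtSeqs, Finset.sum_singleton, zero_add, Finset.range_one, bmtCons]
    exact pow_le_pow_left₀ hq hqw _
  | succ L ih =>
    intro A
    simp only [bmtSeqs]
    calc _ ≤ ∑ I ∈ (A + D).powerset, ∑ J ∈ (bmtSeqs D L I).image (bmtCons A),
            q ^ (∑ k ∈ Finset.range (L + 1 + 1), (J k).card) := by
          exact bmt_sum_biUnion_le _ _ _ (fun J => by positivity)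
      _ = ∑ I ∈ (A + D).powerset, q ^ A.card * ∑ J ∈ bmtSeqs D L I,
            q ^ (∑ k ∈ Finset.range (L + 1), (J k).card) := by
          refine Finset.sum_congr rfl fun I _ => ?_
          rw [Finset.sum_image, Finset.mul_sum]
          · refine Finset.sum_congr rfl fun J _ => ?_
            rw [Finset.sum_range_succ', pow_add, mul_comm]
            rfl
          · intro J _ J' _ he
            funext k
            exact congrFun he (k + 1)
      _ ≤ ∑ I ∈ (A + D).powerset, q ^ A.card * w ^ I.card := by
          refine Finset.sum_le_sum fun I _ => ?_
          exact mul_le_mul_of_nonneg_left (ih I) (by positivity)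
      _ = q ^ A.card * (1 + w) ^ (A + D).card := by
          rw [← Finset.mul_sum, add_comm 1 w, ← Finset.sum_pow_mul_eq_add_pow]
          simp
      _ ≤ q ^ A.card * (1 + w) ^ (A.card * D.card) := by
          gcongr
          · linarith
          · exact Finset.card_add_le
      _ = (q * (1 + w) ^ D.card) ^ A.card := by
          rw [mul_pow, ← pow_mul, mul_comm A.card]
      _ ≤ w ^ A.card := pow_le_pow_left₀ (by positivity) h _

/-- Depth of a piece `x + T` dropped on the height profile `h`. -/
def bmtDep {V : Type*} [AddCommGroup V] (T : Finset V) (h : V → ℕ) (x : V) : ℕ :=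
  T.sup (fun t => h (x + t))

open Classical in
/-- Height profile after dropping the pieces of rounds `< i`. -/
noncomputable def bmtHgt {V : Type*} [AddCommGroup V] (T : Finset V) (S : ℕ → Set V) : ℕ → V → ℕ
  | 0 => fun y => if y ∈ T then 1 else 0
  | i + 1 => fun y => max (bmtHgt T S i y) (T.sup fun t =>
      if y - t ∈ S i ∧ 1 ≤ bmtDep T (bmtHgt T S i) (y - t)
        then bmtDep T (bmtHgt T S i) (y - t) + 1 else 0)

section
variable {V : Type*} [AddCommGroup V] {T : Finset V} {S : ℕ → Set V}

lemma bmt_le_dep {h : V → ℕ} {x t : V} (ht : t ∈ T) : h (x + t) ≤ bmtDep T h x :=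
  Finset.le_sup (f := fun t => h (x + t)) ht

lemma bmt_hgt_mono {i j : ℕ} (hij : i ≤ j) (y : V) : bmtHgt T S i y ≤ bmtHgt T S j y := by
  induction j, hij using Nat.le_induction with
  | base => exact le_rfl
  | succ j _ ih => exact ih.trans (le_max_left _ _)

lemma bmt_hgt_touch {i : ℕ} {x t : V} (hx : x ∈ S i) (ht : t ∈ T)
    (h1 : 1 ≤ bmtDep T (bmtHgt T S i) x) :
    bmtDep T (bmtHgt T S i) x + 1 ≤ bmtHgt T S (i + 1) (x + t) := by
  classical
  simp only [bmtHgt]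
  refine le_trans ?_ (le_max_right _ _)
  refine le_trans ?_ (Finset.le_sup ht)
  simp [hx, h1]

lemma bmt_hgt_le (i : ℕ) : ∀ y, bmtHgt T S i y ≤ i + 1 := by
  classical
  induction i with
  | zero => intro y; simp only [bmtHgt]; split_ifs <;> simp
  | succ i ih =>
    intro y
    simp only [bmtHgt]
    refine max_le ((ih y).trans (by omega)) (Finset.sup_le fun t _ => ?_)
    split_ifs
    · have : bmtDep T (bmtHgt T S i) (y - t) ≤ i + 1 := Finset.sup_le fun t' _ => ih _
      omega
    · omega

lemma bmt_dep_le (i : ℕ) (x : V) : bmtDep T (bmtHgt T S i) x ≤ i + 1 :=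
  Finset.sup_le fun _ _ => bmt_hgt_le i _

lemma bmt_hgt_succ_cases (hT : T.Nonempty) (i : ℕ) (y : V) :
    bmtHgt T S (i + 1) y = bmtHgt T S i y ∨ ∃ x ∈ S i, ∃ t ∈ T, x + t = y ∧
      1 ≤ bmtDep T (bmtHgt T S i) x ∧ bmtHgt T S (i + 1) y = bmtDep T (bmtHgt T S i) x + 1 := by
  classical
  by_cases hle : bmtHgt T S (i + 1) y ≤ bmtHgt T S i y
  · exact Or.inl (le_antisymm hle (le_max_left _ _))
  · right
    obtain ⟨t, ht, he⟩ := Finset.exists_mem_eq_sup T hT (fun t =>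
      if y - t ∈ S i ∧ 1 ≤ bmtDep T (bmtHgt T S i) (y - t)
        then bmtDep T (bmtHgt T S i) (y - t) + 1 else 0)
    have h2 : bmtHgt T S (i + 1) y = max (bmtHgt T S i y) (T.sup fun t =>
      if y - t ∈ S i ∧ 1 ≤ bmtDep T (bmtHgt T S i) (y - t)
        then bmtDep T (bmtHgt T S i) (y - t) + 1 else 0) := rfl
    rw [he] at h2
    split_ifs at h2 with hc
    · refine ⟨y - t, hc.1, t, ht, by abel, hc.2, ?_⟩
      rcases max_choice (bmtHgt T S i y) (bmtDep T (bmtHgt T S i) (y - t) + 1) with h | h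
      · rw [h] at h2; omega
      · rw [h] at h2; exact h2
    · simp only [Nat.max_zero] at h2; omega

lemma bmt_hgt_witness (hT : T.Nonempty) (i : ℕ) : ∀ (y : V) (d : ℕ), 1 ≤ d →
    bmtHgt T S i y = d + 1 → ∃ i' < i, ∃ x ∈ S i', ∃ t ∈ T, x + t = y ∧
      bmtDep T (bmtHgt T S i') x = d := by
  classical
  induction i with
  | zero =>
    intro y d hd h
    simp only [bmtHgt] at h
    split_ifs at h <;> omega
  | succ i ih =>
    intro y d hd h
    rcases bmt_hgt_succ_cases (S := S) hT i y with h1 | ⟨x, hx, t, ht, hxt, _, h1⟩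
    · obtain ⟨i', hi', r⟩ := ih y d hd (by omega)
      exact ⟨i', by omega, r⟩
    · exact ⟨i, by omega, x, hx, t, ht, hxt, by omega⟩

lemma bmt_hgt_one (hT : T.Nonempty) (i : ℕ) (y : V) (h : bmtHgt T S i y = 1) : y ∈ T := by
  classical
  induction i with
  | zero =>
    simp only [bmtHgt] at h
    by_contra hy
    simp [hy] at h
  | succ i ih =>
    rcases bmt_hgt_succ_cases (S := S) hT i y with h1 | ⟨x, hx, t, ht, hxt, h2, h1⟩
    · exact ih (by omega)
    · omega

lemma bmt_dep_zero (hT : T.Nonempty) : bmtDep T (bmtHgt T S 0) 0 = 1 := by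
  classical
  apply le_antisymm (bmt_dep_le 0 0)
  obtain ⟨t, ht⟩ := hT
  refine le_trans ?_ (bmt_le_dep ht)
  simp [bmtHgt, ht]

lemma bmt_dep_one (hT : T.Nonempty) (hS0 : S 0 = {0}) {i : ℕ} {x : V} (hx : x ∈ S i)
    (h : bmtDep T (bmtHgt T S i) x = 1) : x = 0 := by
  rcases Nat.eq_zero_or_pos i with rfl | hi
  · rw [hS0] at hx; exact hx
  · exfalso
    obtain ⟨t, ht, he⟩ := Finset.exists_mem_eq_sup T hT (fun t => bmtHgt T S i (x + t))
    have h1 : bmtHgt T S i (x + t) = 1 := by rw [← h]; exact he.symm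
    have h2 := bmt_hgt_one hT i _ h1
    have h3 := bmt_hgt_touch (S := S) (i := 0) (x := 0) (t := x + t) (by rw [hS0]; rfl) h2
      (bmt_dep_zero hT).ge
    rw [bmt_dep_zero hT, zero_add, zero_add] at h3
    have h4 := bmt_hgt_mono (T := T) (S := S) hi (x + t)
    simp only [Nat.succ_eq_add_one, zero_add] at h4
    omega

lemma bmt_dep_strict {i i' : ℕ} (hi : i < i') {x x' t t' : V} (hx : x ∈ S i)
    (ht : t ∈ T) (ht' : t' ∈ T) (he : x + t = x' + t')
    (h1 : 1 ≤ bmtDep T (bmtHgt T S i) x) :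
    bmtDep T (bmtHgt T S i) x < bmtDep T (bmtHgt T S i') x' := by
  have a1 := bmt_hgt_touch hx ht h1
  have a2 := bmt_hgt_mono (T := T) (S := S) (Nat.succ_le_of_lt hi) (x + t)
  have a3 := bmt_le_dep (h := bmtHgt T S i') (x := x') ht'
  rw [← he] at a3
  simp only [Nat.succ_eq_add_one] at a2
  omega

open scoped Pointwise in
open Classical in
/-- The layer decomposition of the causal past of the root. -/
lemma bmt_layers (hT : T.Nonempty) (L : ℕ) (hS0 : S 0 = {0})
    (hind : ∀ i, ∀ x ∈ S i, ∀ x' ∈ S i, ∀ t ∈ T, ∀ t' ∈ T, x + t = x' + t' → x = x')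
    (hch : ∀ i < L, ∀ x ∈ S i, ∃ x' ∈ S (i + 1), ∃ t ∈ T, ∃ t' ∈ T, x + t = x' + t') :
    ∃ J : ℕ → Finset V, J 0 = {0} ∧ (∀ k, J (k + 1) ⊆ J k + (T - T)) ∧ (∀ k, L < k → J k = ∅) ∧
      (∀ k, ∀ x ∈ J k, ∀ x' ∈ J k, ∀ t ∈ T, ∀ t' ∈ T, x + t = x' + t' → x = x') ∧
      L + 1 ≤ ∑ k ∈ Finset.range (L + 1), (J k).card ∧
      ∀ k, ∀ g ∈ J k, ∃ i ≤ L, g ∈ S i ∧ ∀ t ∈ T,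
        ((Finset.range (L + 1)).filter (fun i' => i < i' ∧ ∃ x ∈ S i', ∃ s ∈ T, x + s = g + t)).card
        = ((Finset.range (L + 1)).filter
            (fun k' => k < k' ∧ ∃ x ∈ J k', ∃ s ∈ T, x + s = g + t)).card := by
  let dep : ℕ → V → ℕ := fun i x => bmtDep T (bmtHgt T S i) x
  let P : ℕ → V → Prop := fun k g => ∃ i ≤ L, g ∈ S i ∧ dep i g = k + 1
  let J : ℕ → Finset V := fun k => Nat.rec {0} (fun k Jk => (Jk + (T - T)).filter (P (k + 1))) k
  have hJ0 : J 0 = {0} := rfl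
  have hJs : ∀ k, J (k + 1) = (J k + (T - T)).filter (P (k + 1)) := fun k => rfl
  have hstrict : ∀ {i i' : ℕ}, i < i' → ∀ {x x' t t' : V}, x ∈ S i → t ∈ T → t' ∈ T →
      x + t = x' + t' → 1 ≤ dep i x → dep i x < dep i' x' := fun hi _ _ _ _ hx ht ht' he h1 =>
    bmt_dep_strict hi hx ht ht' he h1
  have hmem : ∀ k g, g ∈ J k ↔ P k g := by
    intro k
    induction k with
    | zero =>
      intro g
      rw [hJ0, Finset.mem_singleton]
      constructor
      · rintro rfl
        exact ⟨0, Nat.zero_le _, by rw [hS0]; rfl, bmt_dep_zero hT⟩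
      · rintro ⟨i, _, hg, hd⟩
        exact bmt_dep_one hT hS0 hg hd
    | succ k ih =>
      intro g
      rw [hJs, Finset.mem_filter]
      refine ⟨fun h => h.2, fun h => ⟨?_, h⟩⟩
      obtain ⟨i, hi, hg, hd⟩ := h
      obtain ⟨t, ht, he⟩ := Finset.exists_mem_eq_sup T hT (fun t => bmtHgt T S i (g + t))
      have h1 : bmtHgt T S i (g + t) = (k + 1) + 1 := by rw [← hd]; exact he.symm
      obtain ⟨i', hi', x, hx, t', ht', hxt, hdx⟩ := bmt_hgt_witness hT i _ _ (by omega) h1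
      have hxJ : x ∈ J k := (ih x).mpr ⟨i', by omega, hx, hdx⟩
      have : g = x + (t' - t) := by
        rw [← add_sub_assoc, hxt]; abel
      rw [this]
      exact Finset.add_mem_add hxJ (Finset.sub_mem_sub ht' ht)
  refine ⟨J, hJ0, fun k => by rw [hJs]; exact Finset.filter_subset _ _, ?_, ?_, ?_, ?_⟩
  · intro k hk
    rw [Finset.eq_empty_iff_forall_notMem]
    intro g hg
    obtain ⟨i, hi, _, hd⟩ := (hmem k g).mp hg
    have := bmt_dep_le (T := T) (S := S) i g
    simp only [dep] at hd
    omega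
  · intro k x hx x' hx' t ht t' ht' he
    obtain ⟨i, hi, hxS, hd⟩ := (hmem k x).mp hx
    obtain ⟨i', hi', hxS', hd'⟩ := (hmem k x').mp hx'
    rcases lt_trichotomy i i' with h | h | h
    · have := hstrict h hxS ht ht' he (by omega)
      omega
    · subst h
      exact hind i x hxS x' hxS' t ht t' ht' he
    · have := hstrict h hxS' ht' ht he.symm (by omega)
      omega
  · have hex : ∀ i, i ≤ L → ∃ x ∈ S i, 1 ≤ dep i x := by
      intro i
      induction i with
      | zero => exact fun _ => ⟨0, by rw [hS0]; rfl, (bmt_dep_zero hT).ge⟩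
      | succ i ih =>
        intro hi
        obtain ⟨x, hx, h1⟩ := ih (by omega)
        obtain ⟨x', hx', t, ht, t', ht', he⟩ := hch i (by omega) x hx
        have := hstrict (Nat.lt_succ_self i) hx ht ht' he h1
        exact ⟨x', hx', by simp only [Nat.succ_eq_add_one] at this; omega⟩
    choose! X hXS hX1 using hex
    obtain ⟨t, ht⟩ := hT
    rw [← Finset.card_sigma]
    conv_lhs => rw [← Finset.card_range (L + 1)]
    refine Finset.card_le_card_of_injOn (fun i => ⟨dep i (X i) - 1, X i⟩) ?_ ?_
    · intro i hi
      simp only [Finset.coe_range, Set.mem_Iio] at hi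
      have h1 := hX1 i (by omega)
      have h2 : dep i (X i) ≤ i + 1 := bmt_dep_le i (X i)
      simp only [Finset.coe_sigma, Set.mem_sigma_iff, Finset.mem_coe, Finset.mem_range]
      refine ⟨by omega, (hmem _ _).mpr ⟨i, by omega, hXS i (by omega), by omega⟩⟩
    · intro i hi i' hi' he
      simp only [Finset.coe_range, Set.mem_Iio] at hi hi'
      simp only [Sigma.mk.injEq, heq_eq_eq] at he
      obtain ⟨he1, he2⟩ := he
      have h1 := hX1 i (by omega)
      have h1' := hX1 i' (by omega)
      rcases lt_trichotomy i i' with h | h | h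
      · have := hstrict h (x' := X i') (hXS i (by omega)) ht ht (by rw [he2]) h1
        omega
      · exact h
      · have := hstrict h (x' := X i) (hXS i' (by omega)) ht ht (by rw [he2]) h1'
        omega
  · intro k g hg
    obtain ⟨i, hi, hgS, hd⟩ := (hmem k g).mp hg
    refine ⟨i, hi, hgS, fun t ht => ?_⟩
    have hX : ∀ i', (∃ x ∈ S i', ∃ s ∈ T, x + s = g + t) →
      ∃ x, x ∈ S i' ∧ ∃ s ∈ T, x + s = g + t := fun i' ⟨x, hx, h⟩ => ⟨x, hx, h⟩
    choose! X hXS s hsT hXs using hX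
    have key : ∀ i', i < i' → (∃ x ∈ S i', ∃ s ∈ T, x + s = g + t) → k + 1 < dep i' (X i') := by
      intro i' hii' h
      rw [← hd]
      exact hstrict hii' hgS ht (hsT i' h) (hXs i' h).symm (by omega)
    refine Finset.card_bij (fun i' _ => dep i' (X i') - 1) ?_ ?_ ?_
    · intro i' hi'
      rw [Finset.mem_filter, Finset.mem_range] at hi' ⊢
      obtain ⟨h1, h2, h3⟩ := hi'
      have h4 := key i' h2 h3
      have h5 : dep i' (X i') ≤ i' + 1 := bmt_dep_le i' (X i')
      refine ⟨by omega, by omega, X i', (hmem _ _).mpr ⟨i', by omega, hXS i' h3, by omega⟩,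
        s i', hsT i' h3, hXs i' h3⟩
    · intro i₁ hi₁ i₂ hi₂ he
      rw [Finset.mem_filter, Finset.mem_range] at hi₁ hi₂
      obtain ⟨a1, a2, a3⟩ := hi₁
      obtain ⟨b1, b2, b3⟩ := hi₂
      have a4 := key i₁ a2 a3
      have b4 := key i₂ b2 b3
      rcases lt_trichotomy i₁ i₂ with h | h | h
      · have := hstrict h (hXS i₁ a3) (hsT i₁ a3) (hsT i₂ b3) ((hXs i₁ a3).trans (hXs i₂ b3).symm)
          (by omega)
        omega
      · exact h
      · have := hstrict h (hXS i₂ b3) (hsT i₂ b3) (hsT i₁ a3) ((hXs i₂ b3).trans (hXs i₁ a3).symm)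
          (by omega)
        omega
    · intro k' hk'
      rw [Finset.mem_filter, Finset.mem_range] at hk'
      obtain ⟨h1, h2, x, hx, s', hs', hxs⟩ := hk'
      obtain ⟨i', hi', hxS, hdx⟩ := (hmem _ _).mp hx
      have hlt : i < i' := by
        rcases lt_trichotomy i i' with h | h | h
        · exact h
        · subst h
          have := hind i x hxS g hgS s' hs' t ht hxs
          subst this
          omega
        · have := hstrict h hxS hs' ht hxs (by omega)
          omega
      have hex : ∃ x ∈ S i', ∃ s ∈ T, x + s = g + t := ⟨x, hxS, s', hs', hxs⟩
      refine ⟨i', ?_, ?_⟩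
      · rw [Finset.mem_filter, Finset.mem_range]
        exact ⟨by omega, hlt, hex⟩
      · have : X i' = x := hind i' _ (hXS i' hex) x hxS _ (hsT i' hex) s' hs'
          ((hXs i' hex).trans hxs.symm)
        simp only [this]
        omega
end

section
variable {V : Type*} [AddCommGroup V] [MeasurableSpace V] [MeasurableAdd V] {T : Finset V}
  {κ : Type*} [MeasurableSpace κ] [MeasurableSingletonClass κ]

/-- A measurable maximal set of pairwise disjoint translates inside a measurable set. -/
lemma bmt_mis [Finite κ] (hT : T.Nonempty) (c : V → κ) (hc : Measurable c)
    (hprop : ∀ x x', ∀ t ∈ T, ∀ t' ∈ T, x + t = x' + t' → c x = c x' → x = x')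
    (A : Set V) (hA : MeasurableSet A) :
    ∃ S ⊆ A, MeasurableSet S ∧
      (∀ x ∈ S, ∀ x' ∈ S, ∀ t ∈ T, ∀ t' ∈ T, x + t = x' + t' → x = x') ∧
      ∀ x ∈ A, ∃ x' ∈ S, ∃ t ∈ T, ∃ t' ∈ T, x + t = x' + t' := by
  classical
  have := Fintype.ofFinite κ
  suffices h : ∀ K : Finset κ, ∃ S ⊆ A, MeasurableSet S ∧
      (∀ x ∈ S, ∀ x' ∈ S, ∀ t ∈ T, ∀ t' ∈ T, x + t = x' + t' → x = x') ∧
      ∀ x ∈ A, c x ∈ K → ∃ x' ∈ S, ∃ t ∈ T, ∃ t' ∈ T, x + t = x' + t' by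
    obtain ⟨S, h1, h2, h3, h4⟩ := h Finset.univ
    exact ⟨S, h1, h2, h3, fun x hx => h4 x hx (Finset.mem_univ _)⟩
  intro K
  induction K using Finset.induction_on with
  | empty => exact ⟨∅, by simp, MeasurableSet.empty, by simp, by simp⟩
  | insert i K _ ih =>
    obtain ⟨S, h1, h2, h3, h4⟩ := ih
    let Q : Set V := A ∩ (c ⁻¹' {i} ∩ ⋂ t ∈ T, ⋂ t' ∈ T, (fun x => x + (t - t')) ⁻¹' Sᶜ)
    have hQ : ∀ x ∈ Q, ∀ t ∈ T, ∀ t' ∈ T, x + (t - t') ∉ S := by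
      intro x hx t ht t' ht'
      have := hx.2.2
      simp only [Set.mem_iInter] at this
      exact this t ht t' ht'
    refine ⟨S ∪ Q, Set.union_subset h1 Set.inter_subset_left, ?_, ?_, ?_⟩
    · refine h2.union (hA.inter ((hc (measurableSet_singleton i)).inter ?_))
      refine Finset.measurableSet_biInter _ fun t _ => Finset.measurableSet_biInter _ fun t' _ => ?_
      exact (measurable_add_const (t - t')) h2.compl
    · rintro x (hx | hx) x' (hx' | hx') t ht t' ht' he
      · exact h3 x hx x' hx' t ht t' ht' he
      · exfalso
        apply hQ x' hx' t' ht' t ht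
        have : x' + (t' - t) = x := by rw [← add_sub_assoc, ← he]; abel
        rwa [this]
      · exfalso
        apply hQ x hx t ht t' ht'
        have : x + (t - t') = x' := by rw [← add_sub_assoc, he]; abel
        rwa [this]
      · refine hprop x x' t ht t' ht' he ?_
        have a := hx.2.1
        have b := hx'.2.1
        simp only [Set.mem_preimage, Set.mem_singleton_iff] at a b
        rw [a, b]
    · intro x hx hcx
      rw [Finset.mem_insert] at hcx
      by_cases hK : c x ∈ K
      · obtain ⟨x', hx', r⟩ := h4 x hx hK
        exact ⟨x', Or.inl hx', r⟩
      · have hci : c x = i := hcx.resolve_right hK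
        by_cases hxQ : x ∈ Q
        · obtain ⟨t, ht⟩ := hT
          exact ⟨x, Or.inr hxQ, t, ht, t, ht, rfl⟩
        · have : ∃ t ∈ T, ∃ t' ∈ T, x + (t - t') ∈ S := by
            by_contra hcon
            push Not at hcon
            apply hxQ
            refine ⟨hx, hci, ?_⟩
            simp only [Set.mem_iInter]
            exact fun t ht t' ht' => hcon t ht t' ht'
          obtain ⟨t, ht, t', ht', hS⟩ := this
          exact ⟨_, Or.inl hS, t, ht, t', ht', by abel⟩

/-- Points whose translate misses a color at the current levels. -/
def bmtViol {b : ℕ} (T : Finset V) (c : V → κ) (R : κ → ℕ → Fin b) (n : V → ℕ) : Set V :=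
  {x | ∃ col, ∀ t ∈ T, R (c (x + t)) (n (x + t)) ≠ col}

lemma bmt_measurable_val [Countable κ] {b : ℕ} (c : V → κ) (hc : Measurable c)
    (R : κ → ℕ → Fin b) (n : V → ℕ) (hn : Measurable n) : Measurable fun y => R (c y) (n y) :=
  (measurable_of_countable (fun p : κ × ℕ => R p.1 p.2)).comp (hc.prodMk hn)

lemma bmt_measurable_viol [Countable κ] {b : ℕ} (c : V → κ) (hc : Measurable c)
    (R : κ → ℕ → Fin b) (n : V → ℕ) (hn : Measurable n) : MeasurableSet (bmtViol T c R n) := by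
  have h := bmt_measurable_val c hc R n hn
  have : bmtViol T c R n = ⋃ col, ⋂ t ∈ T, (fun x => x + t) ⁻¹' ((fun y => R (c y) (n y)) ⁻¹' {col}ᶜ) := by
    ext x
    simp [bmtViol]
  rw [this]
  refine MeasurableSet.iUnion fun col => Finset.measurableSet_biInter _ fun t _ => ?_
  exact (measurable_add_const t) (h (measurableSet_singleton col).compl)

open Classical in
lemma bmt_process [Finite κ] {b : ℕ} (hT : T.Nonempty) (c : V → κ) (hc : Measurable c)
    (hprop : ∀ x x', ∀ t ∈ T, ∀ t' ∈ T, x + t = x' + t' → c x = c x' → x = x')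
    (R : κ → ℕ → Fin b) :
    ∃ (n : ℕ → V → ℕ) (S : ℕ → Set V), (∀ j, Measurable (n j)) ∧
      (∀ j y, n j y = ((Finset.range j).filter (fun j' => ∃ x ∈ S j', ∃ s ∈ T, x + s = y)).card) ∧
      (∀ j, S j ⊆ bmtViol T c R (n j)) ∧
      (∀ j, ∀ x ∈ S j, ∀ x' ∈ S j, ∀ t ∈ T, ∀ t' ∈ T, x + t = x' + t' → x = x') ∧
      (∀ j, ∀ x ∈ bmtViol T c R (n (j + 1)), ∃ x' ∈ S j, ∃ t ∈ T, ∃ t' ∈ T, x + t = x' + t') := by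
  have hm : ∀ n : {n : V → ℕ // Measurable n}, ∃ S ⊆ bmtViol T c R n, MeasurableSet S ∧
      (∀ x ∈ S, ∀ x' ∈ S, ∀ t ∈ T, ∀ t' ∈ T, x + t = x' + t' → x = x') ∧
      ∀ x ∈ bmtViol T c R n, ∃ x' ∈ S, ∃ t ∈ T, ∃ t' ∈ T, x + t = x' + t' := fun n =>
    bmt_mis hT c hc hprop _ (bmt_measurable_viol c hc R n n.2)
  choose M hM1 hM2 hM3 hM4 using hm
  have htouch : ∀ S : Set V, MeasurableSet S → MeasurableSet {y | ∃ x ∈ S, ∃ s ∈ T, x + s = y} := by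
    intro S hS
    have : {y | ∃ x ∈ S, ∃ s ∈ T, x + s = y} = ⋃ s ∈ T, (fun y => y + (-s)) ⁻¹' S := by
      ext y
      simp only [Set.mem_ofPred_eq, Set.mem_iUnion, Set.mem_preimage, exists_prop]
      constructor
      · rintro ⟨x, hx, s, hs, rfl⟩
        exact ⟨s, hs, by simpa using hx⟩
      · rintro ⟨s, hs, h⟩
        exact ⟨_, h, s, hs, by abel⟩
    rw [this]
    exact Finset.measurableSet_biUnion _ fun s _ => (measurable_add_const (-s)) hS
  let next : {n : V → ℕ // Measurable n} → {n : V → ℕ // Measurable n} := fun n =>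
    ⟨fun y => n.1 y + (if y ∈ {y | ∃ x ∈ M n, ∃ s ∈ T, x + s = y} then 1 else 0),
      n.2.add (Measurable.ite (htouch _ (hM2 n)) measurable_const measurable_const)⟩
  let N : ℕ → {n : V → ℕ // Measurable n} := fun j => Nat.rec ⟨fun _ => 0, measurable_const⟩
    (fun _ n => next n) j
  have hN : ∀ j y, (N (j + 1)).1 y = (N j).1 y +
    (if ∃ x ∈ M (N j), ∃ s ∈ T, x + s = y then 1 else 0) := fun j y => rfl
  refine ⟨fun j => (N j).1, fun j => M (N j), fun j => (N j).2, ?_, fun j => hM1 _,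
    fun j => hM3 _, ?_⟩
  · intro j y
    induction j with
    | zero => simp [N]
    | succ j ih =>
      simp only at ih ⊢
      rw [hN, Finset.range_add_one, Finset.filter_insert, ih]
      split_ifs with h
      · rw [Finset.card_insert_of_notMem (by simp)]
      · simp
  · intro j x hx
    by_cases hv : x ∈ bmtViol T c R (N j).1
    · exact hM4 _ x hv
    · by_contra hcon
      push Not at hcon
      apply hv
      obtain ⟨col, hcol⟩ := hx
      refine ⟨col, fun t ht => ?_⟩
      have h1 := hcol t ht
      simp only at h1
      rw [hN, if_neg] at h1
      · simpa using h1
      · rintro ⟨x', hx', s, hs, he⟩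
        exact hcon x' hx' t ht s hs he.symm

open Classical in
/-- Number of layers deeper than `k` touching `y`. -/
noncomputable def bmtCnt (T : Finset V) (L : ℕ) (J : ℕ → Finset V) (k : ℕ) (y : V) : ℕ :=
  ((Finset.range (L + 1)).filter (fun k' => k < k' ∧ ∃ x ∈ J k', ∃ s ∈ T, x + s = y)).card

/-- A layer structure all of whose pieces are violated by the table. -/
def bmtBad {b : ℕ} (T : Finset V) (L : ℕ) (c : V → κ) (R : κ × Fin (L + 1) → Fin b) (x : V)
    (J : ℕ → Finset V) : Prop :=
  ∀ k ≤ L, ∀ g ∈ J k, ∃ col, ∀ t ∈ T, R (c (x + (g + t)), Fin.ofNat (L + 1) (bmtCnt T L J k (g + t))) ≠ col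

lemma bmt_cnt_le (L : ℕ) (J : ℕ → Finset V) (k : ℕ) (y : V) : bmtCnt T L J k y ≤ L := by
  classical
  unfold bmtCnt
  have : (Finset.range (L + 1)).filter (fun k' => k < k' ∧ ∃ x ∈ J k', ∃ s ∈ T, x + s = y) ⊆
      (Finset.range (L + 1)).erase 0 := by
    intro k' hk'
    rw [Finset.mem_filter] at hk'
    rw [Finset.mem_erase]
    exact ⟨by omega, hk'.1⟩
  have h := Finset.card_le_card this
  rw [Finset.card_erase_of_mem (by simp), Finset.card_range] at h
  simpa using h

lemma bmt_cnt_lt (L : ℕ) (J : ℕ → Finset V) {k k' : ℕ} (hk : k < k') (hk' : k' ≤ L) {g t : V}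
    (hg : g ∈ J k') (ht : t ∈ T) : bmtCnt T L J k' (g + t) < bmtCnt T L J k (g + t) := by
  classical
  unfold bmtCnt
  apply Finset.card_lt_card
  rw [Finset.ssubset_iff_of_subset]
  · refine ⟨k', ?_, ?_⟩
    · rw [Finset.mem_filter, Finset.mem_range]
      exact ⟨by omega, hk, g, hg, t, ht, rfl⟩
    · simp
  · intro a ha
    rw [Finset.mem_filter] at ha ⊢
    exact ⟨ha.1, by omega, ha.2.2⟩

open scoped Pointwise in
open Classical in
/-- The union bound: some table admits no long bad layer structure. -/
lemma bmt_exists_table [Fintype κ] (hT : T.Nonempty) (b : ℕ) (hb : 1 ≤ b) (L : ℕ) (c : V → κ)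
    (G : Finset V) (hinj : ∀ x, ∀ g ∈ G, ∀ g' ∈ G, c (x + g) = c (x + g') → g = g')
    {Q : Type*} [Fintype Q] (key : V → Q)
    (hkey : ∀ x x', key x = key x' → ∀ g ∈ G, c (x + g) = c (x' + g))
    (p : ℝ) (hp : p = (b : ℝ) * (1 - 1 / (b : ℝ)) ^ T.card)
    (hsize : (Fintype.card Q : ℝ) * (p * (Real.exp 1 * (T.card : ℝ) ^ 2)) ^ (L + 1) < 1)
    (hr1 : p * (Real.exp 1 * (T.card : ℝ) ^ 2) ≤ 1) :
    ∃ R : κ × Fin (L + 1) → Fin b, ∀ x, ∀ J ∈ bmtSeqs (T - T) L {0},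
      (∀ k, ∀ x ∈ J k, ∀ x' ∈ J k, ∀ t ∈ T, ∀ t' ∈ T, x + t = x' + t' → x = x') →
      (∀ k ≤ L, ∀ g ∈ J k, ∀ t ∈ T, g + t ∈ G) →
      L + 1 ≤ ∑ k ∈ Finset.range (L + 1), (J k).card → ¬ bmtBad T L c R x J := by
  have hb0 : (0 : ℝ) < b := by exact_mod_cast hb
  have hb1 : (1 : ℝ) ≤ b := by exact_mod_cast hb
  have hm : (0 : ℝ) < T.card := by exact_mod_cast hT.card_pos
  have hm1 : (1 : ℝ) ≤ T.card := by exact_mod_cast hT.card_pos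
  have hp0 : 0 ≤ p := by
    rw [hp]
    have : 0 ≤ 1 - 1 / (b : ℝ) := by
      rw [sub_nonneg, div_le_one hb0]; exact hb1
    positivity
  set q : ℝ := 1 / (Real.exp 1 * (T.card : ℝ) ^ 2) with hq
  set r : ℝ := p * (Real.exp 1 * (T.card : ℝ) ^ 2) with hr
  have hq0 : 0 < q := by positivity
  have hr0 : 0 ≤ r := by positivity
  have hpq : ∀ k : ℕ, p ^ k = r ^ k * q ^ k := by
    intro k
    rw [← mul_pow]
    congr 1
    rw [hr, hq]
    field_simp
  by_contra hcon
  push Not at hcon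
  let Good : Finset (ℕ → Finset V) := (bmtSeqs (T - T) L {0}).filter (fun J =>
      (∀ k, ∀ x ∈ J k, ∀ x' ∈ J k, ∀ t ∈ T, ∀ t' ∈ T, x + t = x' + t' → x = x') ∧
      (∀ k ≤ L, ∀ g ∈ J k, ∀ t ∈ T, g + t ∈ G) ∧
      L + 1 ≤ ∑ k ∈ Finset.range (L + 1), (J k).card)
  let B : V → (ℕ → Finset V) → Finset (κ × Fin (L + 1) → Fin b) := fun x J =>
    Finset.univ.filter (fun R => bmtBad T L c R x J)
  let rep : Q → V := Function.invFun key
  have hrep : ∀ x, key (rep (key x)) = key x := fun x => Function.invFun_eq ⟨x, rfl⟩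
  have hcover : (Finset.univ : Finset (κ × Fin (L + 1) → Fin b)) ⊆
      (Finset.univ : Finset Q).biUnion (fun a => Good.biUnion (fun J => B (rep a) J)) := by
    intro R _
    obtain ⟨x, J, hJ, h1, h2, h3, h4⟩ := hcon R
    simp only [Finset.mem_biUnion]
    refine ⟨key x, Finset.mem_univ _, J, Finset.mem_filter.mpr ⟨hJ, h1, h2, h3⟩,
      Finset.mem_filter.mpr ⟨Finset.mem_univ _, ?_⟩⟩
    intro k hk g hg
    obtain ⟨col, hcol⟩ := h4 k hk g hg
    refine ⟨col, fun t ht => ?_⟩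
    rw [hkey _ x (hrep x) _ (h2 k hk g hg t ht)]
    exact hcol t ht
  set U : ℝ := (b : ℝ) ^ (Fintype.card (κ × Fin (L + 1))) with hU
  have hUpos : 0 < U := by positivity
  have hB : ∀ x, ∀ J ∈ Good, ((B x J).card : ℝ) ≤
      U * (r ^ (L + 1) * q ^ (∑ k ∈ Finset.range (L + 1), (J k).card)) := by
    intro x J hJ
    obtain ⟨_, h1, h2, h3⟩ := Finset.mem_filter.mp hJ
    have h := bmt_count_bad ((Finset.range (L + 1)).sigma J) T b hb
      (fun s t => ((c (x + (s.2 + t)), Fin.ofNat (L + 1) (bmtCnt T L J s.1 (s.2 + t))) :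
        κ × Fin (L + 1))) ?_ (B x J) ?_
    · rw [Finset.card_sigma, ← hp] at h
      refine h.trans ?_
      refine mul_le_mul_of_nonneg_left ?_ hUpos.le
      rw [hpq]
      refine mul_le_mul_of_nonneg_right ?_ (by positivity)
      exact pow_le_pow_of_le_one hr0 hr1 h3
    · rintro ⟨k, g⟩ hs t ht ⟨k', g'⟩ hs' t' ht' he
      rw [Finset.mem_sigma, Finset.mem_range] at hs hs'
      simp only [Prod.mk.injEq] at he
      simp only at hs hs'
      have e1 : g + t = g' + t' := hinj x _ (h2 k (by omega) g hs.2 t ht) _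
        (h2 k' (by omega) g' hs'.2 t' ht') he.1
      have e2 : bmtCnt T L J k (g + t) = bmtCnt T L J k' (g' + t') := by
        have := congrArg Fin.val he.2
        simp only [Fin.ofNat] at this
        rwa [Nat.mod_eq_of_lt (Nat.lt_succ_of_le (bmt_cnt_le _ _ _ _)),
          Nat.mod_eq_of_lt (Nat.lt_succ_of_le (bmt_cnt_le _ _ _ _))] at this
      have e3 : k = k' := by
        rcases lt_trichotomy k k' with h | h | h
        · have := bmt_cnt_lt L J h (by omega) hs'.2 ht'
          rw [e1] at e2; omega
        · exact h
        · have := bmt_cnt_lt L J h (by omega) hs.2 ht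
          rw [← e1] at e2; omega
      subst e3
      have e4 : g = g' := h1 k g hs.2 g' hs'.2 t ht t' ht' e1
      subst e4
      exact ⟨rfl, add_left_cancel e1⟩
    · rintro R hR ⟨k, g⟩ hs
      rw [Finset.mem_sigma, Finset.mem_range] at hs
      exact (Finset.mem_filter.mp hR).2 k (Nat.lt_succ_iff.mp hs.1) g hs.2
  have hD : (T - T).card ≤ T.card ^ 2 := by
    rw [sq]; exact Finset.card_sub_le
  have hqw : q * (1 + 1 / (T.card : ℝ) ^ 2) ^ (T - T).card ≤ 1 / (T.card : ℝ) ^ 2 := by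
    have a1 : (1 + 1 / (T.card : ℝ) ^ 2) ^ (T - T).card ≤ (1 + 1 / (T.card : ℝ) ^ 2) ^ (T.card ^ 2) :=
      pow_le_pow_right₀ (by simp only [le_add_iff_nonneg_right]; positivity) hD
    have a2 : (1 + 1 / (T.card : ℝ) ^ 2) ^ (T.card ^ 2) ≤ Real.exp 1 := by
      have h1 : 1 + 1 / (T.card : ℝ) ^ 2 ≤ Real.exp (1 / (T.card : ℝ) ^ 2) := by
        rw [add_comm]; exact Real.add_one_le_exp _
      calc _ ≤ (Real.exp (1 / (T.card : ℝ) ^ 2)) ^ (T.card ^ 2) := pow_le_pow_left₀ (by positivity) h1 _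
        _ = Real.exp 1 := by
          rw [← Real.exp_nat_mul]
          congr 1
          push_cast
          field_simp
    calc _ ≤ q * Real.exp 1 := mul_le_mul_of_nonneg_left (a1.trans a2) hq0.le
      _ = 1 / (T.card : ℝ) ^ 2 := by rw [hq]; field_simp
  have hsum : ∑ J ∈ Good, q ^ (∑ k ∈ Finset.range (L + 1), (J k).card) ≤ 1 := by
    have h := bmt_seqs_sum (T - T) q (1 / (T.card : ℝ) ^ 2) hq0.le (by positivity) hqw L {0}
    calc _ ≤ ∑ J ∈ bmtSeqs (T - T) L {0}, q ^ (∑ k ∈ Finset.range (L + 1), (J k).card) :=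
          Finset.sum_le_sum_of_subset_of_nonneg (Finset.filter_subset _ _) (fun _ _ _ => by positivity)
      _ ≤ _ := h
      _ ≤ 1 := by
        rw [Finset.card_singleton, pow_one, div_le_one (by positivity)]
        exact one_le_pow₀ hm1
  have hfin : U ≤ (Fintype.card Q : ℝ) * (U * (r ^ (L + 1) * 1)) := by
    calc U = ((Finset.univ : Finset (κ × Fin (L + 1) → Fin b)).card : ℝ) := by
          rw [Finset.card_univ, Fintype.card_fun, Fintype.card_fin]; push_cast; rfl
      _ ≤ (((Finset.univ : Finset Q).biUnion
            (fun a => Good.biUnion (fun J => B (rep a) J))).card : ℝ) := by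
          exact_mod_cast Finset.card_le_card hcover
      _ ≤ ∑ a : Q, ((Good.biUnion (fun J => B (rep a) J)).card : ℝ) := by
          exact_mod_cast Finset.card_biUnion_le
      _ ≤ ∑ a : Q, ∑ J ∈ Good, ((B (rep a) J).card : ℝ) :=
          Finset.sum_le_sum fun a _ => by exact_mod_cast Finset.card_biUnion_le
      _ ≤ ∑ a : Q, ∑ J ∈ Good,
            U * (r ^ (L + 1) * q ^ (∑ k ∈ Finset.range (L + 1), (J k).card)) :=
          Finset.sum_le_sum fun a _ => Finset.sum_le_sum fun J hJ => hB _ J hJ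
      _ = (Fintype.card Q : ℝ) * (U * (r ^ (L + 1) *
            ∑ J ∈ Good, q ^ (∑ k ∈ Finset.range (L + 1), (J k).card))) := by
          rw [Finset.sum_const, Finset.card_univ, nsmul_eq_mul, ← Finset.mul_sum, ← Finset.mul_sum]
      _ ≤ _ := by gcongr
  have : (Fintype.card Q : ℝ) * (U * (r ^ (L + 1) * 1)) = U * ((Fintype.card Q : ℝ) * r ^ (L + 1)) := by
    ring
  rw [this] at hfin
  nlinarith

open scoped Pointwise in
open Classical in
lemma bmt_core [Fintype κ] (hT : T.Nonempty) (b : ℕ) (hb : 1 ≤ b) (L : ℕ) (c : V → κ)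
    (hc : Measurable c)
    (hprop : ∀ x x', ∀ t ∈ T, ∀ t' ∈ T, x + t = x' + t' → c x = c x' → x = x')
    (G : Finset V) (hinj : ∀ x, ∀ g ∈ G, ∀ g' ∈ G, c (x + g) = c (x + g') → g = g')
    (hG : ∀ J : ℕ → Finset V, J 0 = {0} → (∀ k, J (k + 1) ⊆ J k + (T - T)) →
      ∀ k ≤ L, ∀ g ∈ J k, ∀ t ∈ T, g + t ∈ G)
    {Q : Type*} [Fintype Q] (key : V → Q)
    (hkey : ∀ x x', key x = key x' → ∀ g ∈ G, c (x + g) = c (x' + g))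
    (p : ℝ) (hp : p = (b : ℝ) * (1 - 1 / (b : ℝ)) ^ T.card)
    (hsize : (Fintype.card Q : ℝ) * (p * (Real.exp 1 * (T.card : ℝ) ^ 2)) ^ (L + 1) < 1)
    (hr1 : p * (Real.exp 1 * (T.card : ℝ) ^ 2) ≤ 1) :
    ∃ f : V → Fin b, Measurable f ∧ ∀ x : V, ∀ col : Fin b, ∃ t ∈ T, f (x + t) = col := by
  obtain ⟨R, hR⟩ := bmt_exists_table hT b hb L c G hinj key hkey p hp hsize hr1
  let R' : κ → ℕ → Fin b := fun k i => R (k, Fin.ofNat (L + 1) i)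
  obtain ⟨n, S, hn, hncard, hSv, hSind, hSdom⟩ := bmt_process hT c hc hprop R'
  refine ⟨fun y => R' (c y) (n L y), bmt_measurable_val c hc R' _ (hn L), ?_⟩
  intro x₀ col
  by_contra hcon
  push Not at hcon
  have hx₀ : x₀ ∈ bmtViol T c R' (n L) := ⟨col, hcon⟩
  let S' : ℕ → Set V := fun i => if i = 0 then {0} else if i ≤ L then {g | x₀ + g ∈ S (L - i)} else ∅
  have hS'0 : S' 0 = {0} := by simp [S']
  have hS'i : ∀ i, i ≠ 0 → i ≤ L → ∀ g, g ∈ S' i ↔ x₀ + g ∈ S (L - i) := by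
    intro i h1 h2 g
    simp [S', h1, h2]
  have hviol : ∀ i ≤ L, ∀ g ∈ S' i, x₀ + g ∈ bmtViol T c R' (n (L - i)) := by
    intro i hi g hg
    by_cases h0 : i = 0
    · subst h0
      rw [hS'0, Set.mem_singleton_iff] at hg
      subst hg
      simpa using hx₀
    · exact hSv _ ((hS'i i h0 hi g).mp hg)
  obtain ⟨J, hJ0, hJs, hJe, hJind, hJcard, hJidx⟩ := bmt_layers (S := S') hT L hS'0
    (by
      intro i x hx x' hx' t ht t' ht' he
      by_cases h0 : i = 0
      · subst h0
        rw [hS'0, Set.mem_singleton_iff] at hx hx'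
        rw [hx, hx']
      · by_cases hi : i ≤ L
        · rw [hS'i i h0 hi] at hx hx'
          have := hSind _ _ hx _ hx' t ht t' ht' (by rw [add_assoc, add_assoc, he])
          exact add_left_cancel this
        · simp [S', h0, hi] at hx)
    (by
      intro i hi x hx
      have h1 := hviol i hi.le x hx
      have e : L - i = (L - (i + 1)) + 1 := by omega
      rw [e] at h1
      obtain ⟨x', hx', t, ht, t', ht', he⟩ := hSdom _ _ h1
      refine ⟨x' - x₀, ?_, t, ht, t', ht', ?_⟩
      · rw [hS'i (i + 1) (by omega) (by omega)]
        simpa using hx'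
      · have : x + t = (x₀ + x + t) - x₀ := by abel
        rw [this, he]; abel)
  have hJm : J ∈ bmtSeqs (T - T) L {0} := by
    rw [← hJ0]; exact bmt_mem_seqs _ L J hJs hJe
  refine hR x₀ J hJm hJind (hG J hJ0 hJs) hJcard ?_
  intro k hk g hg
  obtain ⟨i, hi, hgS, hcnt⟩ := hJidx k g hg
  obtain ⟨col', hcol'⟩ := hviol i hi g hgS
  refine ⟨col', fun t ht => ?_⟩
  have h1 := hcol' t ht
  have e : n (L - i) (x₀ + g + t) = bmtCnt T L J k (g + t) := by
    rw [hncard]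
    unfold bmtCnt
    rw [← hcnt t ht]
    refine Finset.card_nbij' (fun j => L - j) (fun i' => L - i') ?_ ?_ ?_ ?_
    · intro j hj
      simp only [Finset.coe_filter, Finset.mem_range, Set.mem_ofPred_eq] at hj ⊢
      obtain ⟨hj1, x, hx, s, hs, he⟩ := hj
      refine ⟨by omega, by omega, x - x₀, ?_, s, hs, ?_⟩
      · rw [hS'i _ (by omega) (by omega)]
        have : L - (L - j) = j := by omega
        rw [this]
        simpa using hx
      · have : x - x₀ + s = (x + s) - x₀ := by abel
        rw [this, he]; abel
    · intro i' hi'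
      simp only [Finset.coe_filter, Finset.mem_range, Set.mem_ofPred_eq] at hi' ⊢
      obtain ⟨h1, h2, x, hx, s, hs, he⟩ := hi'
      rw [hS'i _ (by omega) (by omega)] at hx
      exact ⟨by omega, x₀ + x, hx, s, hs, by rw [add_assoc, he, add_assoc]⟩
    · intro j hj
      simp only [Finset.coe_filter, Finset.mem_range, Set.mem_ofPred_eq] at hj
      simp only
      omega
    · intro i' hi'
      simp only [Finset.coe_filter, Finset.mem_range, Set.mem_ofPred_eq] at hi'
      simp only
      omega
  rw [e, add_assoc] at h1
  exact h1
end

/-- The ball of radius `ρ` in the group generated by `T`. -/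
lemma bmt_ball {V : Type*} [AddCommGroup V] (T : Finset V) :
    ∃ B : ℕ → Finset V, (∀ ρ, (B ρ).card ≤ (2 * ρ + 1) ^ T.card) ∧ (0 ∈ B 0) ∧
      (∀ ρ σ, ∀ g ∈ B ρ, ∀ h ∈ B σ, g + h ∈ B (ρ + σ)) ∧
      (∀ ρ, ∀ g ∈ B ρ, -g ∈ B ρ) ∧ (∀ t ∈ T, t ∈ B 1) ∧
      (∀ ρ σ, ρ ≤ σ → B ρ ⊆ B σ) := by
  classical
  let B : ℕ → Finset V := fun ρ =>
    (Fintype.piFinset (fun _ : T => Finset.Icc (-(ρ : ℤ)) ρ)).image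
      (fun a => ∑ t : T, a t • (t : V))
  have hB : ∀ ρ g, g ∈ B ρ ↔ ∃ a : T → ℤ, (∀ t, -(ρ : ℤ) ≤ a t ∧ a t ≤ ρ) ∧
      ∑ t : T, a t • (t : V) = g := by
    intro ρ g
    simp [B, Fintype.mem_piFinset]
  refine ⟨B, ?_, ?_, ?_, ?_, ?_, ?_⟩
  · intro ρ
    refine Finset.card_image_le.trans ?_
    rw [Fintype.card_piFinset]
    simp only [Int.card_Icc, Finset.prod_const, Finset.card_univ, Fintype.card_coe]
    apply le_of_eq
    congr 1
    omega
  · rw [hB]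
    exact ⟨fun _ => 0, by simp, by simp⟩
  · intro ρ σ g hg h hh
    rw [hB] at *
    obtain ⟨a, ha, rfl⟩ := hg
    obtain ⟨a', ha', rfl⟩ := hh
    refine ⟨fun t => a t + a' t, fun t => ?_, ?_⟩
    · have := ha t
      have := ha' t
      push_cast
      constructor <;> omega
    · simp [add_smul, Finset.sum_add_distrib]
  · intro ρ g hg
    rw [hB] at *
    obtain ⟨a, ha, rfl⟩ := hg
    refine ⟨fun t => - a t, fun t => ?_, ?_⟩
    · have := ha t
      dsimp only
      constructor <;> omega
    · simp
  · intro t ht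
    rw [hB]
    refine ⟨fun s => if s = ⟨t, ht⟩ then 1 else 0, fun s => ?_, ?_⟩
    · dsimp only
      split_ifs <;> simp
    · simp [ite_smul]
  · intro ρ σ h g hg
    rw [hB] at *
    obtain ⟨a, ha, rfl⟩ := hg
    refine ⟨a, fun t => ?_, rfl⟩
    have := ha t
    constructor <;> omega

open scoped Pointwise in
open Classical in
lemma bmt_mem_add_sub {V : Type*} [AddCommGroup V] {T : Finset V} (A : Finset V) (g : V) :
    g ∈ A + (T - T) ↔ ∃ g' ∈ A, ∃ s ∈ T, ∃ s' ∈ T, g' + (s - s') = g := by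
  simp only [Finset.mem_add, Finset.mem_sub]
  constructor
  · rintro ⟨g', hg', d, ⟨s, hs, s', hs', rfl⟩, rfl⟩
    exact ⟨g', hg', s, hs, s', hs', rfl⟩
  · rintro ⟨g', hg', s, hs, s', hs', rfl⟩
    exact ⟨g', hg', _, ⟨s, hs, s', hs', rfl⟩, rfl⟩

lemma bmt_exists_L (m : ℕ) (r : ℝ) (h0 : 0 ≤ r) (h1 : r < 1) :
    ∃ L : ℕ, (((5 * (8 * L + 5) ^ m + 1) * ((4 * L + 3) ^ m + 1) : ℕ) : ℝ) * r ^ (L + 1) < 1 := by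
  have hlim := (tendsto_pow_const_mul_const_pow_of_abs_lt_one (2 * m)
    (show |r| < 1 by rwa [abs_of_nonneg h0])).const_mul ((6 * 8 ^ m * (2 * 4 ^ m) : ℕ) : ℝ)
  rw [mul_zero] at hlim
  have hlim' := hlim.comp (Filter.tendsto_add_atTop_nat 1)
  obtain ⟨L, hL⟩ := (hlim'.eventually (gt_mem_nhds one_pos)).exists
  refine ⟨L, lt_of_le_of_lt ?_ hL⟩
  have hnat : (5 * (8 * L + 5) ^ m + 1) * ((4 * L + 3) ^ m + 1)
      ≤ (6 * 8 ^ m * (2 * 4 ^ m)) * (L + 1) ^ (2 * m) := by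
    have e1 : (8 * L + 5) ^ m ≤ 8 ^ m * (L + 1) ^ m := by
      rw [← mul_pow]; exact Nat.pow_le_pow_left (by omega) m
    have e2 : (4 * L + 3) ^ m ≤ 4 ^ m * (L + 1) ^ m := by
      rw [← mul_pow]; exact Nat.pow_le_pow_left (by omega) m
    have p1 : 1 ≤ (8 * L + 5) ^ m := Nat.one_le_pow _ _ (by omega)
    have p2 : 1 ≤ (4 * L + 3) ^ m := Nat.one_le_pow _ _ (by omega)
    calc (5 * (8 * L + 5) ^ m + 1) * ((4 * L + 3) ^ m + 1)
        ≤ (6 * (8 ^ m * (L + 1) ^ m)) * (2 * (4 ^ m * (L + 1) ^ m)) :=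
          Nat.mul_le_mul (by omega) (by omega)
      _ = _ := by ring
  have hr : 0 ≤ r ^ (L + 1) := pow_nonneg h0 _
  have := mul_le_mul_of_nonneg_right (Nat.cast_le (α := ℝ).2 hnat) hr
  refine this.trans (le_of_eq ?_)
  simp only [Function.comp]
  push_cast
  ring

/-- Corollary 1.2 of the paper (Erdős–Lovász).  If `T ⊆ ℝⁿ` is a finite nonempty set of vectors
and `b ≥ 1` satisfies `b·(1 − 1/b)^|T| < 1/(e·|T|²)`, then there is a `b`-coloring
`f : ℝⁿ → {0,…,b−1}` such that `f` is Borel measurable and every translate `x + T` is multicolored. -/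
theorem borel_multicolored_translates (n : ℕ) (hn : 1 ≤ n)
    (T : Finset (Fin n → ℝ)) (hT : T.Nonempty)
    (b : ℕ) (hb : 1 ≤ b)
    (hineq : (b : ℝ) * (1 - 1 / (b : ℝ)) ^ T.card
      < 1 / (Real.exp 1 * (T.card : ℝ) ^ 2)) :
    ∃ f : (Fin n → ℝ) → Fin b, Measurable f ∧
      ∀ x : Fin n → ℝ, ∀ c : Fin b, ∃ t ∈ T, f (x + t) = c := by
  classical
  have hm : (0 : ℝ) < T.card := by exact_mod_cast hT.card_pos
  have hD : 0 < Real.exp 1 * (T.card : ℝ) ^ 2 := by positivity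
  have hb' : (1 : ℝ) ≤ b := by exact_mod_cast hb
  have hp0 : 0 ≤ (b : ℝ) * (1 - 1 / (b : ℝ)) ^ T.card := by
    apply mul_nonneg (by linarith)
    apply pow_nonneg
    rw [sub_nonneg, div_le_one (by linarith)]
    exact hb'
  obtain ⟨B, hcard, hB0, hBadd, hBneg, hBT, hBmono⟩ := bmt_ball T
  have hr1 := (lt_div_iff₀ hD).1 hineq
  obtain ⟨L, hL⟩ := bmt_exists_L T.card _ (mul_nonneg hp0 hD.le) hr1
  have hsub : ∀ ρ σ, ∀ g ∈ B ρ, ∀ h ∈ B σ, g - h ∈ B (ρ + σ) := by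
    intro ρ σ g hg h hh
    rw [sub_eq_add_neg]
    exact hBadd _ _ _ hg _ (hBneg _ _ hh)
  have hc1 : (B (4 * L + 2)).card ≤ (8 * L + 5) ^ T.card := by
    refine (hcard _).trans (le_of_eq ?_)
    congr 1; ring
  have hc2 : (B (2 * L + 1)).card ≤ (4 * L + 3) ^ T.card := by
    refine (hcard _).trans (le_of_eq ?_)
    congr 1; ring
  obtain ⟨c, hcm, hc, key, hkey⟩ := bmt_exists_coloring (B (2 * L + 1))
    ((B (4 * L + 2)).erase 0) (fun g hg => (Finset.mem_erase.1 hg).1)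
    (5 * (8 * L + 5) ^ T.card + 1)
    (by have := (Finset.card_erase_le (s := B (4 * L + 2)) (a := 0)); omega)
  letI : MeasurableSpace (ZMod (5 * (8 * L + 5) ^ T.card + 1)) := ⊤
  haveI : MeasurableSingletonClass (ZMod (5 * (8 * L + 5) ^ T.card + 1)) := ⟨fun _ => trivial⟩
  have hdiff : ∀ x x', x' - x ∈ B (4 * L + 2) → c x = c x' → x = x' := by
    intro x x' h hcx
    by_contra hne
    refine hc x (x' - x) (Finset.mem_erase.2 ⟨sub_ne_zero.2 (Ne.symm hne), h⟩) ?_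
    rw [add_sub_cancel]
    exact hcx.symm
  refine bmt_core hT b hb L c (measurable_to_countable' hcm) ?_ (B (2 * L + 1)) ?_ ?_ key hkey
    _ rfl ?_ hr1.le
  · intro x x' t ht t' ht' hxx hcx
    apply hdiff _ _ _ hcx
    have : x' - x = t - t' := by
      rw [sub_eq_sub_iff_add_eq_add, ← hxx, add_comm]
    rw [this]
    exact hBmono (1 + 1) _ (by omega) (hsub _ _ _ (hBT _ ht) _ (hBT _ ht'))
  · intro x g hg g' hg' hcx
    have := hdiff (x + g) (x + g') ?_ hcx
    · exact add_left_cancel this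
    · rw [add_sub_add_left_eq_sub]
      exact hBmono ((2 * L + 1) + (2 * L + 1)) _ (by omega) (hsub _ _ _ hg' _ hg)
  · intro J hJ0 hJ k hk g hg t ht
    have hind : ∀ k, ∀ g ∈ J k, g ∈ B (2 * k) := by
      intro k
      induction k with
      | zero =>
        intro g hg
        rw [hJ0, Finset.mem_singleton] at hg
        rw [hg]; exact hB0
      | succ k ih =>
        intro g hg
        obtain ⟨g', hg', s, hs, s', hs', rfl⟩ := (bmt_mem_add_sub _ _).1 (hJ k hg)
        exact hBadd (2 * k) (1 + 1) _ (ih _ hg') _ (hsub _ _ _ (hBT _ hs) _ (hBT _ hs'))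
    exact hBmono (2 * k + 1) _ (by omega) (hBadd _ _ _ (hind k g hg) _ (hBT _ ht))
  · refine lt_of_le_of_lt ?_ hL
    apply mul_le_mul_of_nonneg_right _ (pow_nonneg (mul_nonneg hp0 hD.le) _)
    rw [Nat.cast_le, Fintype.card_prod, ZMod.card, Fintype.card_fin]
    exact Nat.mul_le_mul le_rfl (by omega)
end

section
/- Let Δ ≥ 2 be an integer and set c := (Δ−1)^{Δ−1}/Δ^Δ. Define a sequence of real numbers by a_0 := c and a_{i+1} := c·(1 + a_i)^Δ for all i ∈ ℕ. Then a_i ≤ 1/(Δ−1) for every i ∈ ℕ. -/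
/-- The key numerical estimate in the proof of the tree-counting lemma: with
`c = (Δ−1)^(Δ−1)/Δ^Δ`, the recursion `a 0 = c`, `a (i+1) = c·(1 + a i)^Δ` stays
bounded by `1/(Δ−1)`. -/
theorem tree_recursion_bound (Δ : ℕ) (hΔ : 2 ≤ Δ) (c : ℝ)
    (hc : c = ((Δ : ℝ) - 1) ^ (Δ - 1) / (Δ : ℝ) ^ Δ)
    (a : ℕ → ℝ) (ha0 : a 0 = c) (ha : ∀ i, a (i + 1) = c * (1 + a i) ^ Δ) :
    ∀ i, a i ≤ 1 / ((Δ : ℝ) - 1) := by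
  obtain ⟨n, rfl⟩ : ∃ n, Δ = n + 1 := ⟨Δ - 1, by omega⟩
  have hn : (0 : ℝ) < n := by
    have : 0 < n := by omega
    exact_mod_cast this
  have e : ((n + 1 : ℕ) : ℝ) - 1 = n := by push_cast; ring
  rw [e, Nat.add_sub_cancel] at hc
  rw [e]
  push_cast at hc
  have hc0 : 0 ≤ c := by rw [hc]; positivity
  have key : c * (1 + 1 / (n : ℝ)) ^ (n + 1) = 1 / n := by
    have h1 : 1 + 1 / (n : ℝ) = (n + 1) / n := by field_simp
    have h2 : ((n : ℝ) + 1) ^ (n + 1) ≠ 0 := by positivity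
    have h3 : (n : ℝ) ^ n ≠ 0 := by positivity
    rw [hc, h1, div_pow, div_mul_div_cancel₀ h2, pow_succ]
    field_simp
  have main : ∀ i, 0 ≤ a i ∧ a i ≤ 1 / (n : ℝ) := by
    intro i
    induction i with
    | zero =>
      rw [ha0]
      refine ⟨hc0, ?_⟩
      rw [← key]
      refine le_mul_of_one_le_right hc0 (one_le_pow₀ ?_)
      have : 0 < 1 / (n : ℝ) := by positivity
      linarith
    | succ k ih =>
      obtain ⟨h0, h1⟩ := ih
      rw [ha]
      refine ⟨by positivity, ?_⟩
      calc c * (1 + a k) ^ (n + 1) ≤ c * (1 + 1 / (n : ℝ)) ^ (n + 1) := by gcongr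
        _ = 1 / n := key
  exact fun i => (main i).2
end

section
/- Let G be a graph with vertex set V, let d denote the graph metric of G and B(x,r) := {y ∈ V : d(x,y) ≤ r} the ball of radius r. Let ε > 0 and let n ≥ 1 be an integer such that |B(x,3n)| < (1+ε)^n for all x ∈ V (in particular these balls are finite). Let g : V → ℕ be a function that attains its maximum at some point y ∈ V, with g(y) > 0. Then there exists an integer r with 3 ≤ r ≤ 3n such that Σ_{x ∈ B(y,r)} g(x) < (1+ε) · Σ_{x ∈ B(y,r−3)} g(x). -/
/-- Paths of length `n` in an undirected graph with adjacency relation `Adj`. -/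
def chain {V : Type*} (Adj : V → V → Prop) : ℕ → V → V → Prop
  | 0, x, y => x = y
  | n+1, x, y => ∃ z, Adj x z ∧ chain Adj n z y

/-- The ball of radius `r` about `x` in the graph metric. -/
def gball {V : Type*} (Adj : V → V → Prop) (x : V) (r : ℕ) : Set V :=
  {y | ∃ m ≤ r, chain Adj m x y}

/-- Lemma 4.2 of the paper: if all balls of radius `3n` have fewer than `(1+ε)^n` elements and
`g : V → ℕ` attains its (positive) maximum at `y`, then for some `3 ≤ r ≤ 3n` the sum of `g`
over `B(y,r)` is less than `(1+ε)` times the sum of `g` over `B(y,r−3)`. -/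
theorem growth_lemma {V : Type*} (Adj : V → V → Prop)
    (hsymm : ∀ x y, Adj x y → Adj y x)
    (ε : ℝ) (hε : 0 < ε) (n : ℕ) (hn : 1 ≤ n)
    (hball : ∀ x : V, (gball Adj x (3 * n)).Finite ∧
      ((gball Adj x (3 * n)).ncard : ℝ) < (1 + ε) ^ n)
    (g : V → ℕ) (y : V) (hmax : ∀ x, g x ≤ g y) (hy : 0 < g y) :
    ∃ r : ℕ, 3 ≤ r ∧ r ≤ 3 * n ∧
      (∑ᶠ x ∈ gball Adj y r, (g x : ℝ)) <
        (1 + ε) * ∑ᶠ x ∈ gball Adj y (r - 3), (g x : ℝ) := by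
  by_contra hcon
  push Not at hcon
  have key : ∀ k ≤ n, (1 + ε) ^ k * (g y : ℝ) ≤ ∑ᶠ x ∈ gball Adj y (3 * k), (g x : ℝ) := by
    intro k
    induction k with
    | zero =>
      intro _
      have h0 : gball Adj y (3 * 0) = {y} := by
        ext z
        simp [gball, chain, eq_comm]
      rw [h0, finsum_mem_singleton]
      simp
    | succ k ih =>
      intro hk
      have h1 := ih (by omega)
      have h2 := hcon (3 * (k + 1)) (by omega) (by omega)
      have h3 : 3 * (k + 1) - 3 = 3 * k := by omega
      rw [h3] at h2
      refine le_trans ?_ h2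
      rw [pow_succ', mul_assoc]
      exact mul_le_mul_of_nonneg_left h1 (by positivity)
  have h1 := key n le_rfl
  obtain ⟨hfin, hcard⟩ := hball y
  have hy' : (0 : ℝ) < g y := by exact_mod_cast hy
  have h2 : ∑ᶠ x ∈ gball Adj y (3 * n), (g x : ℝ) ≤ (gball Adj y (3 * n)).ncard * (g y : ℝ) := by
    rw [finsum_mem_eq_finite_toFinset_sum _ hfin, Set.ncard_eq_toFinset_card _ hfin,
      ← nsmul_eq_mul]
    exact Finset.sum_le_card_nsmul _ _ _ (fun x _ => by exact_mod_cast hmax x)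
  have h3 := mul_lt_mul_of_pos_right hcard hy'
  linarith
end
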